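/- arXiv:math/9507205 — 2 statements merged into one kernel-verified Lean document; each statement's English description precedes it below -/
import Mathlib

section
/- Let h : S¹ → S¹ be an orientation-preserving homeomorphism with h(ℤ[1/2]) = ℤ[1/2], and assume that both h ∘ ν₂ ∘ h⁻¹ and h⁻¹ ∘ ν₂ ∘ h are everywhere-defined elements of T̄_{2,1}. Then h is piecewise linear, i.e., there is a finite subset of S¹ off which h is locally affine. -/
/-!
Lift `h` to an increasing bijection `H` of the line commuting with `x ↦ x + 1`. A map which is
piecewise linear with dyadic breaks, slopes powers of two and dyadic values carries short standard
dyadic intervals `[k / 2 ^ n, (k + 1) / 2 ^ n]` to standard ones, and so does its inverse.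
Therefore the two conjugacy hypotheses say that doubling and halving, conjugated by `H` or by its
inverse, carry short standard intervals to standard intervals (`doublingStd_of_memTbar`). Composing
halvings, integer translations and doublings gives the affine map between any two short standard
intervals whose indices agree modulo `2 ^ N`. Hence such maps carry `H`-images of standard intervals
to `H`-images of standard intervals: `H` has *memory* `N` (`exists_memory`), and the inverse of `H`
has some memory `M`.

The main step is that one of the two maps has memory zero (`memory_zero`). Suppose the minimal
memory of `H` is positive, and consider a shortest standard interval violating a smaller one. Its
two halves are carried to adjacent standard intervals which are not the halves of a standard
interval. Two adjacent standard intervals with indices even and odd, in this order, always are such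
halves, so one of the two halves changes the parity of its index (`exists_parity_change`). On that
half the carrying map is affine, and it is a valid map for the inverse of `H` between indices of
different parity. As there are only two parities, any positive memory of the inverse can then be
lowered by one (`memory_step`), down to zero.

Suppose finally that `H` has memory zero. Then the preimages under `H` of all short standard
intervals are subdivided into standard intervals in the same way. A standard interval at the left
end of such a preimage which could never be enlarged beyond the left half would be common to the
preimages of arbitrarily short intervals, which is absurd; the same holds at the right end. So a
standard interval at the left end overlaps one at the right end; being nested, one of them is the
whole preimage (`std_of_memory_zero`). A monotone map carrying all short standard intervals to
standard intervals respects midpoints, hence is affine on them (`affine_of_std`). So the inverse of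
`H` is affine on short standard intervals and `H` is piecewise linear. If instead the inverse has
memory zero, then `H` itself is affine on short standard intervals.
-/

noncomputable section

/-- `ℤ[1/n]` realized as a subset of `ℝ`: all reals of the form `a * n^b` with `a b : ℤ`. -/
def zpows (n : ℕ) : Set ℝ := {x : ℝ | ∃ a b : ℤ, x = (a : ℝ) * (n : ℝ) ^ b}

/-- The defining properties of the (unique) ring homomorphism `φₙ : ℤ[1/n] → ℤ/(n-1)ℤ`,
expressed for a function `φ : ℝ → ZMod (n-1)` restricted to the subset `zpows n`. -/
def IsPhi (n : ℕ) (φ : ℝ → ZMod (n - 1)) : Prop :=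
  (∀ x ∈ zpows n, ∀ y ∈ zpows n, φ (x + y) = φ x + φ y) ∧
  (∀ x ∈ zpows n, ∀ y ∈ zpows n, φ (x * y) = φ x * φ y) ∧
  φ 1 = 1

/-- Piecewise linearity data on the circle `ℝ/rℤ`, expressed for an `r`-periodic lift
`F : ℝ → ℝ`: there is an `r`-periodic break set `B ⊆ ℤ[1/n]`, finite in each period,
off which `F` is locally affine with slopes integral powers of `n`. -/
def CircPL (n : ℕ) (r : ℝ) (F : ℝ → ℝ) : Prop :=
  ∃ B : Set ℝ,
    (B ∩ Set.Ico (0 : ℝ) r).Finite ∧ (∀ x ∈ B, x + r ∈ B ∧ x - r ∈ B) ∧ B ⊆ zpows n ∧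
    ∀ x ∉ B, ∃ (k : ℤ) (c : ℝ), ∃ ε > 0, ∀ y : ℝ, |y - x| < ε → F y = (n : ℝ) ^ k * y + c

/-- Membership in `T_{n,r}`: an orientation-preserving homeomorphism of the circle
`S_r = ℝ/rℤ` (encoded by a strictly monotone surjective lift commuting with `x ↦ x + r`),
piecewise linear with finitely many breaks, all breaks in `ℤ[1/n]`, all slopes integral
powers of `n`, and mapping (the image of) `ℤ[1/n]` into itself. -/
def MemT (n : ℕ) (r : ℝ) (f : AddCircle r → AddCircle r) : Prop :=
  ∃ F : ℝ → ℝ,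
    (∀ x : ℝ, f (x : AddCircle r) = ((F x : ℝ) : AddCircle r)) ∧
    (∀ x : ℝ, F (x + r) = F x + r) ∧
    StrictMono F ∧ Function.Surjective F ∧ CircPL n r F ∧
    (∀ q ∈ zpows n, F q ∈ zpows n)

/-- An everywhere-defined element of `T̄_{n,r}`: a continuous, locally orientation-preserving
local homeomorphism of the circle `S_r` (encoded by a strictly monotone continuous lift `G`
with `G (x + r) = G x + d·r` for some degree `d ≥ 1`), piecewise linear with finitely many
breaks, all breaks in `ℤ[1/n]`, all slopes integral powers of `n`, and mapping `ℤ[1/n]`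
into itself. -/
def MemTbar (n : ℕ) (r : ℝ) (g : AddCircle r → AddCircle r) : Prop :=
  ∃ (G : ℝ → ℝ) (d : ℕ), 0 < d ∧
    (∀ x : ℝ, g (x : AddCircle r) = ((G x : ℝ) : AddCircle r)) ∧
    (∀ x : ℝ, G (x + r) = G x + (d : ℝ) * r) ∧
    StrictMono G ∧ Continuous G ∧ CircPL n r G ∧
    (∀ q ∈ zpows n, G q ∈ zpows n)

/-- An orientation-preserving homeomorphism of the circle `S_r`, encoded by the existence
of a strictly monotone surjective lift commuting with `x ↦ x + r`. -/
def OrientedHomeo (r : ℝ) (h : AddCircle r → AddCircle r) : Prop :=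
  ∃ H : ℝ → ℝ,
    (∀ x : ℝ, h (x : AddCircle r) = ((H x : ℝ) : AddCircle r)) ∧
    (∀ x : ℝ, H (x + r) = H x + r) ∧
    StrictMono H ∧ Function.Surjective H

/-- The doubling map `ν₂ : S¹ → S¹`, `x ↦ 2x (mod 1)`. -/
def nu2 : AddCircle (1 : ℝ) → AddCircle (1 : ℝ) := fun z => z + z

/-- The image of the dyadic rationals `ℤ[1/2]` in the circle `S¹ = ℝ/ℤ`. -/
def dyadicCircle : Set (AddCircle (1 : ℝ)) :=
  {z : AddCircle (1 : ℝ) | ∃ q ∈ zpows 2, z = ((q : ℝ) : AddCircle (1 : ℝ))}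

namespace DyadicConj

/-! ### Standard dyadic intervals -/

/-- The dyadic rational `k / 2 ^ n`. The standard dyadic interval of level `n` and index `k` is
`[dy n k, dy n (k + 1)]`. -/
def dy (n : ℕ) (k : ℤ) : ℝ := (k : ℝ) / 2 ^ n

/-- `x` and `y` are the left and right endpoints of a standard dyadic interval of length at
most one. -/
def Std (x y : ℝ) : Prop := ∃ (n : ℕ) (k : ℤ), x = dy n k ∧ y = dy n (k + 1)

/-- The increasing affine map carrying the standard interval `(n, k)` onto `(n', k')`. -/
def aff (n : ℕ) (k : ℤ) (n' : ℕ) (k' : ℤ) (x : ℝ) : ℝ :=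
  (x - dy n k) * 2 ^ n / 2 ^ n' + dy n' k'

lemma dy_succ (n : ℕ) (k : ℤ) : dy n (k + 1) = dy n k + 1 / 2 ^ n := by
  simp only [dy]; push_cast; ring

lemma dy_lt (n : ℕ) (k : ℤ) : dy n k < dy n (k + 1) := by
  rw [dy_succ]; have : (0 : ℝ) < 1 / 2 ^ n := by positivity
  linarith

lemma dy_refine (n t : ℕ) (k : ℤ) : dy (n + t) (k * 2 ^ t) = dy n k := by
  simp only [dy]; push_cast; rw [pow_add]; field_simp

lemma dy_two (n : ℕ) (k : ℤ) : dy (n + 1) (2 * k) = dy n k := by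
  have := dy_refine n 1 k
  rw [← this]; congr 1; ring

lemma dy_two_add (n : ℕ) (k : ℤ) : dy (n + 1) (2 * k + 1) = dy n k + 1 / 2 ^ (n + 1) := by
  rw [dy_succ, dy_two]

lemma dy_two_add_two (n : ℕ) (k : ℤ) : dy (n + 1) (2 * k + 1 + 1) = dy n (k + 1) := by
  rw [← dy_two n (k + 1)]; congr 1; ring

lemma half_lt (n : ℕ) : (1 : ℝ) / 2 ^ n = 1 / 2 ^ (n + 1) + 1 / 2 ^ (n + 1) := by
  rw [pow_succ]; field_simp; norm_num

lemma inv_pow_le_iff {m n : ℕ} : (1 : ℝ) / 2 ^ m ≤ 1 / 2 ^ n ↔ n ≤ m := by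
  rw [one_div_le_one_div (by positivity) (by positivity)]
  exact pow_le_pow_iff_right₀ (by norm_num)

lemma aff_mono (n : ℕ) (k : ℤ) (n' : ℕ) (k' : ℤ) : StrictMono (aff n k n' k') := by
  intro x y h
  have h1 : (x - dy n k) * (2 ^ n / 2 ^ n') < (y - dy n k) * (2 ^ n / 2 ^ n') :=
    mul_lt_mul_of_pos_right (by linarith) (by positivity)
  simp only [aff, mul_div_assoc]; linarith

lemma aff_left (n : ℕ) (k : ℤ) (n' : ℕ) (k' : ℤ) : aff n k n' k' (dy n k) = dy n' k' := by
  simp [aff]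

lemma aff_right (n : ℕ) (k : ℤ) (n' : ℕ) (k' : ℤ) :
    aff n k n' k' (dy n (k + 1)) = dy n' (k' + 1) := by
  simp only [aff, dy]; push_cast; field_simp; ring

lemma aff_comp (n : ℕ) (k : ℤ) (n' : ℕ) (k' : ℤ) (n'' : ℕ) (k'' : ℤ) (x : ℝ) :
    aff n' k' n'' k'' (aff n k n' k' x) = aff n k n'' k'' x := by
  simp only [aff]; field_simp; ring

lemma aff_self (n : ℕ) (k : ℤ) (x : ℝ) : aff n k n k x = x := by
  simp only [aff]; field_simp; ring

/-- Corresponding subintervals determine the same affine map. -/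
lemma aff_refine (n : ℕ) (k : ℤ) (n' : ℕ) (k' : ℤ) (t : ℕ) (s : ℤ) :
    aff (n + t) (k * 2 ^ t + s) (n' + t) (k' * 2 ^ t + s) = aff n k n' k' := by
  funext x
  simp only [aff, dy]; push_cast; simp only [pow_add]; field_simp; ring

lemma level_le {n m : ℕ} {k j : ℤ} (h1 : dy n k ≤ dy m j) (h2 : dy m (j + 1) ≤ dy n (k + 1)) :
    n ≤ m := by
  rw [dy_succ, dy_succ] at h2
  exact inv_pow_le_iff.1 (by linarith)

lemma aff_std {n m : ℕ} {k j : ℤ} (h1 : dy n k ≤ dy m j) (h2 : dy m (j + 1) ≤ dy n (k + 1))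
    (n' : ℕ) (k' : ℤ) : Std (aff n k n' k' (dy m j)) (aff n k n' k' (dy m (j + 1))) := by
  obtain ⟨t, rfl⟩ := Nat.exists_eq_add_of_le (level_le h1 h2)
  have e : aff n k n' k' = aff (n + t) j (n' + t) (k' * 2 ^ t + (j - k * 2 ^ t)) := by
    rw [← aff_refine n k n' k' t (j - k * 2 ^ t)]; congr 1; ring
  exact ⟨_, _, by rw [e, aff_left], by rw [e, aff_right]⟩

lemma std_lt {x y : ℝ} (h : Std x y) : x < y := by
  obtain ⟨n, k, rfl, rfl⟩ := h
  exact dy_lt n k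

/-- A standard interval is split into two standard intervals only at its midpoint. -/
lemma mid_unique {n : ℕ} {k : ℤ} {x y z : ℝ} (hx : x = dy n k) (hz : z = dy n (k + 1))
    (h1 : Std x y) (h2 : Std y z) : y = dy (n + 1) (2 * k + 1) := by
  obtain ⟨p, a, hp, hp'⟩ := h1
  obtain ⟨q, b, hq, hq'⟩ := h2
  rw [dy_succ] at hp' hq' hz
  have hs : (1 : ℝ) / 2 ^ p + 1 / 2 ^ q = 1 / 2 ^ n := by linarith
  have hpp : (0 : ℝ) < 1 / 2 ^ p := by positivity
  have hqp : (0 : ℝ) < 1 / 2 ^ q := by positivity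
  have hp1 : n + 1 ≤ p := by
    by_contra hc
    have := inv_pow_le_iff.2 (show p ≤ n by omega)
    linarith
  have hq1 : n + 1 ≤ q := by
    by_contra hc
    have := inv_pow_le_iff.2 (show q ≤ n by omega)
    linarith
  have hp2 : p = n + 1 := by
    by_contra hc
    have h3 := inv_pow_le_iff.2 (show n + 1 + 1 ≤ p by omega)
    have h4 := inv_pow_le_iff.2 hq1
    have h5 := half_lt n
    have h6 := half_lt (n + 1)
    have h7 : (0 : ℝ) < 1 / 2 ^ (n + 1 + 1) := by positivity
    linarith
  rw [dy_two_add, ← hx, hp', ← hp, hp2]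

/-- Adjacent standard intervals with even left index and odd right index are siblings. -/
lemma sibling {n m : ℕ} {a b : ℤ} (h : dy n (a + 1) = dy m b) (ha : a % 2 = 0)
    (hb : b % 2 = 1) (hn : 1 ≤ n) : Std (dy n a) (dy m (b + 1)) := by
  have hz : (a + 1) * 2 ^ m = b * 2 ^ n := by
    simp only [dy] at h
    field_simp at h
    exact_mod_cast (by push_cast at h ⊢; linarith : (((a + 1) * 2 ^ m : ℤ) : ℝ) = ((b * 2 ^ n : ℤ) : ℝ))
  have key : ∀ (u v : ℤ) (p t : ℕ), u * 2 ^ (p + t + 1) = v * 2 ^ p → v % 2 = 0 := by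
    intro u v p t e
    have e2 : v = 2 * (u * 2 ^ t) := by
      have h2 : (2 : ℤ) ^ p ≠ 0 := by positivity
      apply mul_right_cancel₀ h2
      rw [← e]; ring
    omega
  have hnm : n = m := by
    rcases lt_trichotomy n m with hlt | he | hgt
    · obtain ⟨t, rfl⟩ := Nat.exists_eq_add_of_lt hlt
      have := key _ _ _ _ hz
      omega
    · exact he
    · obtain ⟨t, rfl⟩ := Nat.exists_eq_add_of_lt hgt
      have := key _ _ _ _ hz.symm
      omega
  subst hnm
  have hab : a + 1 = b := by
    have h2 : (2 : ℤ) ^ n ≠ 0 := by positivity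
    exact mul_right_cancel₀ h2 hz
  obtain ⟨n, rfl⟩ := Nat.exists_eq_add_of_le' hn
  obtain ⟨c, rfl⟩ : ∃ c, a = 2 * c := ⟨a / 2, by omega⟩
  refine ⟨n, c, dy_two n c, ?_⟩
  rw [← hab, dy_two_add_two]

/-- A strictly monotone map carrying every standard subinterval of a standard interval to a
standard interval is affine there. -/
lemma affine_of_std {Γ : ℝ → ℝ} (hΓ : StrictMono Γ) {n n' : ℕ} {k k' : ℤ}
    (hl : Γ (dy n k) = dy n' k') (hr : Γ (dy n (k + 1)) = dy n' (k' + 1))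
    (hs : ∀ m j, dy n k ≤ dy m j → dy m (j + 1) ≤ dy n (k + 1) →
      Std (Γ (dy m j)) (Γ (dy m (j + 1)))) :
    ∀ x, dy n k ≤ x → x ≤ dy n (k + 1) → Γ x = aff n k n' k' x := by
  have key : ∀ (t n n' : ℕ) (k k' : ℤ), Γ (dy n k) = dy n' k' → Γ (dy n (k + 1)) = dy n' (k' + 1) →
      (∀ m j, dy n k ≤ dy m j → dy m (j + 1) ≤ dy n (k + 1) →
      Std (Γ (dy m j)) (Γ (dy m (j + 1)))) →
      ∀ x, dy n k ≤ x → x ≤ dy n (k + 1) → |Γ x - aff n k n' k' x| ≤ 1 / 2 ^ (n' + t) := by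
    intro t
    induction t with
    | zero =>
      intro n n' k k' hl hr hs x h1 h2
      have a1 := hΓ.monotone h1
      have a2 := hΓ.monotone h2
      have a3 := (aff_mono n k n' k').monotone h1
      have a4 := (aff_mono n k n' k').monotone h2
      rw [aff_left] at a3
      rw [aff_right] at a4
      rw [hl] at a1
      rw [hr] at a2
      have := dy_succ n' k'
      rw [abs_le, add_zero]; constructor <;> linarith
    | succ t ih =>
      intro n n' k k' hl hr hs x h1 h2
      have e1 := dy_two n k
      have e2 := dy_two_add_two n k
      have e3 := dy_lt (n + 1) (2 * k)
      have e4 := dy_lt (n + 1) (2 * k + 1)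
      have s1 := hs (n + 1) (2 * k) e1.ge (by linarith)
      have s2 := hs (n + 1) (2 * k + 1) (by linarith) e2.le
      rw [e1, hl] at s1
      rw [e2, hr] at s2
      have hm := mid_unique rfl rfl s1 s2
      rw [show n' + (t + 1) = n' + 1 + t by ring]
      rcases le_total x (dy (n + 1) (2 * k + 1)) with hx | hx
      · have := ih (n + 1) (n' + 1) (2 * k) (2 * k') (by rw [e1, hl, dy_two]) hm
          (fun m j g1 g2 => hs m j (by linarith) (by linarith)) x (by linarith) hx
        have e : aff (n + 1) (2 * k) (n' + 1) (2 * k') = aff n k n' k' := by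
          rw [← aff_refine n k n' k' 1 0]; congr 1 <;> ring
        rwa [e] at this
      · have := ih (n + 1) (n' + 1) (2 * k + 1) (2 * k' + 1) hm (by rw [e2, hr, dy_two_add_two])
          (fun m j g1 g2 => hs m j (by linarith) (by linarith)) x hx (by linarith)
        have e : aff (n + 1) (2 * k + 1) (n' + 1) (2 * k' + 1) = aff n k n' k' := by
          rw [← aff_refine n k n' k' 1 1]; congr 1 <;> ring
        rwa [e] at this
  intro x h1 h2
  by_contra hne
  have hpos : 0 < |Γ x - aff n k n' k' x| := abs_pos.2 (sub_ne_zero.2 hne)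
  obtain ⟨t, ht⟩ := exists_pow_lt_of_lt_one hpos (show (1 / 2 : ℝ) < 1 by norm_num)
  have h3 := key t n n' k k' hl hr hs x h1 h2
  have h4 : (1 : ℝ) / 2 ^ (n' + t) ≤ 1 / 2 ^ t := inv_pow_le_iff.2 (by omega)
  rw [one_div_pow] at ht
  linarith

/-! ### Memory of a homeomorphism -/

/-- Let `g` be the affine map from the standard interval `(n, k)` to `(n', k')`. The condition
says that `g` carries every image under `H` of a standard interval, if contained in `(n, k)`, to
the image under `H` of a standard interval. -/
def Good (H : ℝ ≃o ℝ) (n : ℕ) (k : ℤ) (n' : ℕ) (k' : ℤ) : Prop :=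
  ∀ m j, dy n k ≤ H (dy m j) → H (dy m (j + 1)) ≤ dy n (k + 1) →
    Std (H.symm (aff n k n' k' (H (dy m j)))) (H.symm (aff n k n' k' (H (dy m (j + 1)))))

/-- `Good` holds between any two sufficiently short standard intervals whose indices agree in the
last `N` binary digits. -/
def Memory (H : ℝ ≃o ℝ) (N : ℕ) : Prop :=
  ∃ K, ∀ n n', K ≤ n → K ≤ n' → ∀ k k' : ℤ, k ≡ k' [ZMOD 2 ^ N] → Good H n k n' k'

/-- Both `x ↦ 2 * x` and `x ↦ x / 2`, conjugated by `H`, carry all sufficiently short standard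
intervals to standard intervals. -/
def DoublingStd (H : ℝ ≃o ℝ) : Prop :=
  ∃ K, ∀ n, K ≤ n → ∀ k : ℤ,
    Std (H.symm (2 * H (dy n k))) (H.symm (2 * H (dy n (k + 1)))) ∧
    Std (H.symm (H (dy n k) / 2)) (H.symm (H (dy n (k + 1)) / 2))

/-- `H` maps the set of dyadic rationals onto itself. -/
def DyadicPres (H : ℝ ≃o ℝ) : Prop :=
  (∀ n k, ∃ n' k', H (dy n k) = dy n' k') ∧ ∀ n k, ∃ n' k', H.symm (dy n k) = dy n' k'

lemma DyadicPres.symm {H : ℝ ≃o ℝ} (h : DyadicPres H) : DyadicPres H.symm :=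
  ⟨h.2, by simpa using h.1⟩

lemma Good.trans {H : ℝ ≃o ℝ} {n n' n'' : ℕ} {k k' k'' : ℤ} (h1 : Good H n k n' k')
    (h2 : Good H n' k' n'' k'') : Good H n k n'' k'' := by
  intro m j hl hr
  obtain ⟨m', j', e1, e2⟩ := h1 m j hl hr
  have e1' : H (dy m' j') = aff n k n' k' (H (dy m j)) := by rw [← e1]; simp
  have e2' : H (dy m' (j' + 1)) = aff n k n' k' (H (dy m (j + 1))) := by rw [← e2]; simp
  have := h2 m' j' (by rw [e1', ← aff_left n k n' k']; exact (aff_mono _ _ _ _).monotone hl)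
    (by rw [e2', ← aff_right n k n' k']; exact (aff_mono _ _ _ _).monotone hr)
  rwa [e1', e2', aff_comp, aff_comp] at this

lemma dy_refine_le (n t : ℕ) (k s : ℤ) (h0 : 0 ≤ s) (h1 : s < 2 ^ t) :
    dy n k ≤ dy (n + t) (k * 2 ^ t + s) ∧ dy (n + t) (k * 2 ^ t + s + 1) ≤ dy n (k + 1) := by
  rw [← dy_refine n t k, ← dy_refine n t (k + 1)]
  simp only [dy]
  constructor
  · apply div_le_div_of_nonneg_right _ (by positivity)
    exact_mod_cast (by omega)
  · apply div_le_div_of_nonneg_right _ (by positivity)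
    have : k * 2 ^ t + s + 1 ≤ (k + 1) * 2 ^ t := by
      rw [add_mul]; omega
    exact_mod_cast this

lemma Good.refine {H : ℝ ≃o ℝ} {n n' : ℕ} {k k' : ℤ} (h : Good H n k n' k') (t : ℕ) (s : ℤ)
    (h0 : 0 ≤ s) (h1 : s < 2 ^ t) :
    Good H (n + t) (k * 2 ^ t + s) (n' + t) (k' * 2 ^ t + s) := by
  intro m j hl hr
  obtain ⟨g1, g2⟩ := dy_refine_le n t k s h0 h1
  rw [aff_refine]
  exact h m j (by linarith) (by linarith)

/-- Images of standard intervals contained in short standard intervals are themselves short. -/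
lemma exists_depth (H : ℝ ≃o ℝ) (hH : ∀ x, H (x + 1) = H x + 1) (L : ℕ) :
    ∃ N, ∀ n, N ≤ n → ∀ k m j, dy n k ≤ H (dy m j) → H (dy m (j + 1)) ≤ dy n (k + 1) → L ≤ m := by
  have hcont : ContinuousOn H.symm (Set.Icc 0 2) := H.symm.continuous.continuousOn
  have huc := isCompact_Icc.uniformContinuousOn_of_continuous hcont
  rw [Metric.uniformContinuousOn_iff] at huc
  obtain ⟨δ, hδ, huc⟩ := huc (1 / 2 ^ L) (by positivity)
  obtain ⟨N, hN⟩ := exists_pow_lt_of_lt_one hδ (show (1 / 2 : ℝ) < 1 by norm_num)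
  have hper : ∀ (x : ℝ) (z : ℤ), H.symm (x + z) = H.symm x + z := by
    have hp : Function.Periodic (fun x => H.symm x - x) 1 := by
      intro x
      have : H.symm (x + 1) = H.symm x + 1 := by
        rw [OrderIso.symm_apply_eq, hH]; simp
      simp only [this]; ring
    intro x z
    have := hp.int_mul z x
    simp only [mul_one] at this
    linarith
  refine ⟨N, fun n hn k m j hl hr => ?_⟩
  have hlt := H.strictMono (dy_lt m j)
  set x := H (dy m j) with hx
  set y := H (dy m (j + 1)) with hy
  have h1 : (1 : ℝ) / 2 ^ n ≤ 1 / 2 ^ N := inv_pow_le_iff.2 hn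
  have h2 := dy_succ n k
  rw [one_div_pow] at hN
  have h3 : (1 : ℝ) / 2 ^ n ≤ 1 := by simpa using inv_pow_le_iff.2 (Nat.zero_le n)
  have f1 := Int.floor_le x
  have f2 := Int.lt_floor_add_one x
  have h4 := huc (x + ((-⌊x⌋ : ℤ) : ℝ)) (by push_cast; constructor <;> linarith)
    (y + ((-⌊x⌋ : ℤ) : ℝ)) (by push_cast; constructor <;> linarith)
    (by rw [Real.dist_eq, abs_lt]; constructor <;> linarith)
  rw [hper, hper, Real.dist_eq, abs_lt] at h4
  have ex : H.symm x = dy m j := by simp [hx]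
  have ey : H.symm y = dy m (j + 1) := by simp [hy]
  rw [ex, ey, dy_succ] at h4
  exact inv_pow_le_iff.1 (by linarith [h4.1])

/-- The affine map between two intervals whose indices agree modulo `2 ^ N` is a composition of
halvings, an integer translation and doublings. -/
lemma exists_memory {H : ℝ ≃o ℝ} (hH : ∀ x, H (x + 1) = H x + 1) (hD : DoublingStd H) :
    ∃ N, Memory H N := by
  obtain ⟨K, hK⟩ := hD
  obtain ⟨N, hN⟩ := exists_depth H hH K
  have up : ∀ n k t, N ≤ n → Good H (n + t) k n k := by
    intro n k t hn
    induction t with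
    | zero => intro m j _ _; rw [add_zero, aff_self, aff_self]; exact ⟨m, j, by simp, by simp⟩
    | succ t ih =>
      refine Good.trans ?_ ih
      intro m j hl hr
      have := (hK m (hN _ (by omega) _ _ _ hl hr) j).1
      have e : ∀ x, aff (n + (t + 1)) k (n + t) k x = 2 * x := by
        intro x; rw [← add_assoc]; simp only [aff, dy]; rw [pow_succ]; field_simp; ring
      rwa [e, e]
  have down : ∀ n k t, N ≤ n → Good H n k (n + t) k := by
    intro n k t hn
    induction t with
    | zero => intro m j _ _; rw [add_zero, aff_self, aff_self]; exact ⟨m, j, by simp, by simp⟩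
    | succ t ih =>
      refine Good.trans ih ?_
      intro m j hl hr
      have := (hK m (hN _ (by omega) _ _ _ hl hr) j).2
      have e : ∀ x, aff (n + t) k (n + (t + 1)) k x = x / 2 := by
        intro x; rw [← add_assoc]; simp only [aff, dy]; rw [pow_succ]; field_simp; ring
      rwa [e, e]
  have hper : ∀ (x : ℝ) (z : ℤ), H.symm (H x + z) = x + z := by
    have hp : Function.Periodic (fun x => H x - x) 1 := by
      intro x; simp only [hH]; ring
    intro x z
    rw [OrderIso.symm_apply_eq]
    have := hp.int_mul z x
    simp only [mul_one] at this
    linarith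
  have trans : ∀ k z, Good H N k N (k + 2 ^ N * z) := by
    intro k z m j _ _
    have e : ∀ x, aff N k N (k + 2 ^ N * z) x = x + z := by
      intro x; simp only [aff, dy]; push_cast; field_simp; ring
    rw [e, e, hper, hper]
    refine ⟨m, j + z * 2 ^ m, ?_, ?_⟩ <;> (simp only [dy]; push_cast; field_simp)
    ring
  refine ⟨N, N, fun n n' hn hn' k k' hk => ?_⟩
  obtain ⟨t, rfl⟩ := Nat.exists_eq_add_of_le hn
  obtain ⟨t', rfl⟩ := Nat.exists_eq_add_of_le hn'
  obtain ⟨z, hz⟩ := hk.dvd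
  obtain rfl : k' = k + 2 ^ N * z := by linarith
  exact ((up N k t le_rfl).trans (trans k z)).trans (down N _ t' le_rfl)

/-! ### One of the two memories is zero -/

/-- If the memory `N + 1` of `H` cannot be lowered to `N`, there are arbitrarily short pairs of
standard intervals with indices of different parity related by `Good` for the inverse of `H`.
Take a shortest standard interval not carried to a standard one by the conjugate `Γ` of an affine
map violating memory `N`. Its halves are carried to adjacent standard intervals; these are not
siblings, so by `sibling` one of the two halves changes the parity of its index. -/
lemma exists_parity_change {H : ℝ ≃o ℝ} (hH : ∀ x, H (x + 1) = H x + 1) (hd : DyadicPres H)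
    {N : ℕ} (h1 : Memory H (N + 1)) (h0 : ¬ Memory H N) (L : ℕ) :
    ∃ (μ μ' : ℕ) (i i' : ℤ), L ≤ μ ∧ L ≤ μ' ∧ i % 2 ≠ i' % 2 ∧
      Good H.symm μ i μ' i' ∧ Good H.symm μ' i' μ i := by
  obtain ⟨K, hK⟩ := h1
  obtain ⟨D, hD⟩ := exists_depth H hH (L + 1)
  simp only [Memory, not_exists, not_forall] at h0
  obtain ⟨n, n', hn, hn', k, k', hk, hbad⟩ := h0 (max K D)
  have hnK : K ≤ n := le_trans (le_max_left _ _) hn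
  have hnD : D ≤ n := le_trans (le_max_right _ _) hn
  have hnK' : K ≤ n' := le_trans (le_max_left _ _) hn'
  have hnD' : D ≤ n' := le_trans (le_max_right _ _) hn'
  set g := aff n k n' k' with hg
  set Γ : ℝ → ℝ := fun x => H.symm (g (H x)) with hΓ
  have hΓm : StrictMono Γ := fun x y h => H.symm.strictMono (aff_mono _ _ _ _ (H.strictMono h))
  let In : ℕ → ℤ → Prop := fun m j => dy n k ≤ H (dy m j) ∧ H (dy m (j + 1)) ≤ dy n (k + 1)
  let Bad : ℕ → ℤ → Prop := fun m j => In m j ∧ ¬ Std (Γ (dy m j)) (Γ (dy m (j + 1)))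
  have hex : ∃ m j, Bad m j := by
    by_contra hc
    simp only [not_exists, Bad, not_and, not_not] at hc
    exact hbad fun m j a b => hc m j ⟨a, b⟩
  -- A bad interval has the preimage of the midpoint in its interior.
  obtain ⟨r, c, hrc⟩ := hd.2 (n + 1) (2 * k + 1)
  have hk2 : ∀ s : ℤ, 2 * k + s ≡ 2 * k' + s [ZMOD 2 ^ (N + 1)] := by
    intro s
    apply Int.ModEq.add_right
    rw [pow_succ, mul_comm (2 ^ N : ℤ) 2]
    exact Int.ModEq.mul_left' hk
  have good0 := hK (n + 1) (n' + 1) (by omega) (by omega) (2 * k) (2 * k') (by simpa using hk2 0)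
  have good1 := hK (n + 1) (n' + 1) (by omega) (by omega) (2 * k + 1) (2 * k' + 1) (hk2 1)
  have ea0 : aff (n + 1) (2 * k) (n' + 1) (2 * k') = g := by
    rw [hg, ← aff_refine n k n' k' 1 0]; congr 1 <;> ring
  have ea1 : aff (n + 1) (2 * k + 1) (n' + 1) (2 * k' + 1) = g := by
    rw [hg, ← aff_refine n k n' k' 1 1]; congr 1 <;> ring
  have hbound : ∀ m j, Bad m j → m ≤ r := by
    rintro m j ⟨⟨b1, b2⟩, b3⟩
    have c1 : dy m j < dy r c := by
      by_contra hc
      rw [not_lt, ← hrc, OrderIso.symm_apply_le] at hc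
      have := good1 m j hc (by rwa [dy_two_add_two])
      rw [ea1] at this
      exact b3 this
    have c2 : dy r c < dy m (j + 1) := by
      by_contra hc
      rw [not_lt, ← hrc, OrderIso.le_symm_apply] at hc
      have := good0 m j (by rwa [dy_two]) hc
      rw [ea0] at this
      exact b3 this
    by_contra hlt
    obtain ⟨t, rfl⟩ := Nat.exists_eq_add_of_lt (not_le.1 hlt)
    rw [← dy_refine r (t + 1) c, add_assoc] at c1 c2
    simp only [dy] at c1 c2
    rw [div_lt_div_iff_of_pos_right (by positivity)] at c1 c2
    have d1 : j < c * 2 ^ (t + 1) := by exact_mod_cast c1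
    have d2 : c * 2 ^ (t + 1) < j + 1 := by exact_mod_cast c2
    omega
  obtain ⟨m, ⟨j, hbj⟩, hmax⟩ : ∃ m, (∃ j, Bad m j) ∧ ∀ m' > m, ∀ j, ¬ Bad m' j := by
    have hbd : BddAbove {m | ∃ j, Bad m j} := ⟨r, fun m ⟨j, h⟩ => hbound m j h⟩
    refine ⟨sSup {m | ∃ j, Bad m j}, Nat.sSup_mem hex hbd, fun m' hm' j hb => ?_⟩
    exact absurd (le_csSup hbd ⟨j, hb⟩) (not_le.2 hm')
  obtain ⟨⟨b1, b2⟩, b3⟩ := hbj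
  have e1 := dy_two m j
  have e2 := dy_two_add_two m j
  have l1 := dy_lt (m + 1) (2 * j)
  have l2 := dy_lt (m + 1) (2 * j + 1)
  have hgood : ∀ p q, dy m j ≤ dy p q → dy p (q + 1) ≤ dy m (j + 1) → m < p →
      Std (Γ (dy p q)) (Γ (dy p (q + 1))) := by
    intro p q h1 h2 h3
    by_contra hc
    exact hmax p h3 q ⟨⟨b1.trans (H.monotone h1), (H.monotone h2).trans b2⟩, hc⟩
  -- The affine map is a `Good` map for the inverse as soon as `Γ` is itself affine.
  have fin : ∀ (p : ℕ) (q : ℤ) (p' : ℕ) (q' : ℤ), m < p → dy m j ≤ dy p q →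
      dy p (q + 1) ≤ dy m (j + 1) → Γ (dy p q) = dy p' q' → Γ (dy p (q + 1)) = dy p' (q' + 1) →
      L ≤ p ∧ L + 1 ≤ p' ∧ Good H.symm p q p' q' ∧ Good H.symm p' q' p q := by
    intro p q p' q' hp h1 h2 h3 h4
    have i1 : dy n k ≤ H (dy p q) := b1.trans (H.monotone h1)
    have i2 : H (dy p (q + 1)) ≤ dy n (k + 1) := (H.monotone h2).trans b2
    have f3 : H (dy p' q') = g (H (dy p q)) := by rw [← h3]; simp [hΓ]
    have f4 : H (dy p' (q' + 1)) = g (H (dy p (q + 1))) := by rw [← h4]; simp [hΓ]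
    have i3 : dy n' k' ≤ H (dy p' q') := by
      rw [f3, ← aff_left n k n' k']; exact (aff_mono _ _ _ _).monotone i1
    have i4 : H (dy p' (q' + 1)) ≤ dy n' (k' + 1) := by
      rw [f4, ← aff_right n k n' k']; exact (aff_mono _ _ _ _).monotone i2
    have haff := affine_of_std hΓm h3 h4 (fun p2 q2 g1 g2 =>
      hgood p2 q2 (h1.trans g1) (g2.trans h2) (lt_of_lt_of_le hp (level_le g1 g2)))
    refine ⟨by have := hD n hnD _ _ _ i1 i2; omega, hD n' hnD' _ _ _ i3 i4, ?_, ?_⟩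
    · intro a b u1 u2
      have hlt := H.symm.strictMono (dy_lt a b)
      rw [← haff _ u1 (hlt.le.trans u2), ← haff _ (u1.trans hlt.le) u2]
      simp only [hΓ, OrderIso.symm_symm, OrderIso.apply_symm_apply]
      rw [OrderIso.le_symm_apply] at u1
      rw [OrderIso.symm_apply_le] at u2
      exact aff_std (i1.trans u1) (u2.trans i2) _ _
    · intro a b u1 u2
      have key : ∀ X, dy p' q' ≤ H.symm X → H.symm X ≤ dy p' (q' + 1) →
          H.symm.symm (aff p' q' p q (H.symm X)) = aff n' k' n k X := by
        intro X v1 v2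
        have w1 : dy p q ≤ aff p' q' p q (H.symm X) := by
          rw [← aff_left p' q' p q]; exact (aff_mono _ _ _ _).monotone v1
        have w2 : aff p' q' p q (H.symm X) ≤ dy p (q + 1) := by
          rw [← aff_right p' q' p q]; exact (aff_mono _ _ _ _).monotone v2
        have := haff _ w1 w2
        rw [aff_comp, aff_self] at this
        simp only [hΓ] at this
        have h5 : aff n k n' k' (H (aff p' q' p q (H.symm X))) = X := H.symm.injective this
        rw [OrderIso.symm_symm]
        conv_rhs => rw [← h5]
        rw [aff_comp, aff_self]
      have hlt := H.symm.strictMono (dy_lt a b)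
      rw [key _ u1 (hlt.le.trans u2), key _ (u1.trans hlt.le) u2]
      rw [OrderIso.le_symm_apply] at u1
      rw [OrderIso.symm_apply_le] at u2
      exact aff_std (i3.trans u1) (u2.trans i4) _ _
  obtain ⟨n1, a, ha, ha'⟩ := hgood (m + 1) (2 * j) e1.ge (by linarith) (by omega)
  obtain ⟨n2, b, hb, hb'⟩ := hgood (m + 1) (2 * j + 1) (by linarith) e2.le (by omega)
  obtain ⟨A1, A2, A3, A4⟩ := fin _ _ _ _ (by omega) e1.ge (by linarith) ha ha'
  obtain ⟨B1, B2, B3, B4⟩ := fin _ _ _ _ (by omega) (by linarith) e2.le hb hb'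
  by_cases hpa : a % 2 = 0
  · by_cases hpb : b % 2 = 1
    · exfalso
      apply b3
      have := sibling (ha'.symm.trans hb) hpa hpb (by omega)
      rwa [← ha, ← hb', e1, e2] at this
    · exact ⟨_, _, _, _, B1, by omega, by omega, B3, B4⟩
  · exact ⟨_, _, _, _, A1, by omega, by omega, A3, A4⟩

/-- The memory `M + 1` distinguishes two parities of the digit `q` preceding the last `M` digits.
A single pair of `Good` maps between indices of different parity connects these two classes. -/
lemma memory_step {H : ℝ ≃o ℝ} {M : ℕ} (hM : Memory H (M + 1))
    (hpar : ∀ L : ℕ, ∃ (μ μ' : ℕ) (i i' : ℤ), L ≤ μ ∧ L ≤ μ' ∧ i % 2 ≠ i' % 2 ∧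
      Good H μ i μ' i' ∧ Good H μ' i' μ i) : Memory H M := by
  obtain ⟨K, hK⟩ := hM
  obtain ⟨μ, μ', i, i', hμ, hμ', hpi, g1, g2⟩ := hpar K
  refine ⟨K, fun n n' hn hn' k k' hk => ?_⟩
  obtain ⟨s, hs0, hs1, q, hq⟩ : ∃ s : ℤ, 0 ≤ s ∧ s < 2 ^ M ∧ ∃ q, k = q * 2 ^ M + s :=
    ⟨k % 2 ^ M, Int.emod_nonneg _ (by positivity), Int.emod_lt_of_pos _ (by positivity),
      k / 2 ^ M, by rw [mul_comm]; exact (Int.mul_ediv_add_emod k (2 ^ M)).symm⟩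
  obtain ⟨z, hz⟩ := hk.dvd
  obtain ⟨q', hq'⟩ : ∃ q', k' = q' * 2 ^ M + s := ⟨q + z, by linarith⟩
  have cong : ∀ a b : ℤ, a % 2 = b % 2 → a * 2 ^ M + s ≡ b * 2 ^ M + s [ZMOD 2 ^ (M + 1)] := by
    intro a b hab
    apply Int.ModEq.add_right
    rw [pow_succ, mul_comm a, mul_comm b]
    exact Int.ModEq.mul_left' hab
  subst hq hq'
  by_cases hqq : q % 2 = q' % 2
  · exact hK n n' hn hn' _ _ (cong _ _ hqq)
  have r1 := g1.refine M s hs0 hs1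
  have r2 := g2.refine M s hs0 hs1
  by_cases hqi : q % 2 = i % 2
  · exact ((hK n (μ + M) hn (by omega) _ _ (cong _ _ hqi)).trans r1).trans
      (hK (μ' + M) n' (by omega) hn' _ _ (cong _ _ (by omega)))
  · exact ((hK n (μ' + M) hn (by omega) _ _ (cong _ _ (by omega))).trans r2).trans
      (hK (μ + M) n' (by omega) hn' _ _ (cong _ _ (by omega)))

/-- One of the two memories is zero: if the minimal memory of `H` is positive, every positive
memory of the inverse can be lowered. -/
lemma memory_zero {H : ℝ ≃o ℝ} (hH : ∀ x, H (x + 1) = H x + 1) (hd : DyadicPres H)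
    (h1 : ∃ N, Memory H N) (h2 : ∃ N, Memory H.symm N) : Memory H 0 ∨ Memory H.symm 0 := by
  classical
  by_cases h0 : Memory H 0
  · exact Or.inl h0
  right
  obtain ⟨N, hN⟩ : ∃ N, Nat.find h1 = N + 1 := by
    apply Nat.exists_eq_succ_of_ne_zero
    intro h
    exact h0 (h ▸ Nat.find_spec h1)
  have hpar := exists_parity_change hH hd (hN ▸ Nat.find_spec h1)
    (Nat.find_min h1 (show N < Nat.find h1 by omega))
  obtain ⟨M, hM⟩ := h2
  induction M with
  | zero => exact hM
  | succ M ih => exact ih (memory_step hM hpar)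

/-! ### Memory zero -/

lemma exists_small (x : ℝ) (hx : 0 < x) : ∃ t : ℕ, (1 : ℝ) / 2 ^ t < x := by
  obtain ⟨t, ht⟩ := exists_pow_lt_of_lt_one hx (show (1 / 2 : ℝ) < 1 by norm_num)
  exact ⟨t, by rwa [one_div_pow] at ht⟩

/-- Overlapping standard intervals are nested, so one of `[s, y]` and `[x, t]` is `[s, t]`. -/
lemma overlap {s y x t : ℝ} (h1 : Std s y) (h2 : Std x t) (hsx : s ≤ x) (hxy : x < y)
    (hyt : y ≤ t) : Std s t := by
  have h1' := h1
  have h2' := h2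
  obtain ⟨m, j, rfl, rfl⟩ := h1
  obtain ⟨m', j', rfl, rfl⟩ := h2
  have key : ∀ (p q : ℕ) (a b : ℤ), dy (p + q) a < dy p b → dy (p + q) (a + 1) ≤ dy p b := by
    intro p q a b h
    rw [← dy_refine p q b] at h ⊢
    simp only [dy] at h ⊢
    rw [div_lt_div_iff_of_pos_right (by positivity)] at h
    apply div_le_div_of_nonneg_right _ (by positivity)
    have : a < b * 2 ^ q := by exact_mod_cast h
    exact_mod_cast this
  have key2 : ∀ (p q : ℕ) (a b : ℤ), dy p b < dy (p + q) (a + 1) → dy p b ≤ dy (p + q) a := by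
    intro p q a b h
    by_contra hc
    exact absurd (key p q a b (not_le.1 hc)) (not_le.2 h)
  rcases le_total m m' with h | h
  · obtain ⟨q, rfl⟩ := Nat.exists_eq_add_of_le h
    have := key _ _ _ _ hxy
    rwa [← le_antisymm hyt this]
  · obtain ⟨q, rfl⟩ := Nat.exists_eq_add_of_le h
    have := key2 _ _ _ _ hxy
    rwa [← le_antisymm this hsx]

/-- With memory zero, the preimages of all short standard intervals have the same subdivision into
standard intervals. A maximal standard interval at the left end of such a preimage that stayed in
its left half would be common to the preimages of arbitrarily short intervals; hence it passes the
midpoint, and so does the one at the right end. -/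
lemma std_of_memory_zero {H : ℝ ≃o ℝ} (hd : DyadicPres H) (h : Memory H 0) :
    ∃ K, ∀ n, K ≤ n → ∀ k, Std (H.symm (dy n k)) (H.symm (dy n (k + 1))) := by
  obtain ⟨K, hK⟩ := h
  have hG : ∀ n n', K ≤ n → K ≤ n' → ∀ k k', Good H n k n' k' := by
    intro n n' h1 h2 k k'
    exact hK n n' h1 h2 k k' (by simpa using Int.modEq_one)
  refine ⟨K, fun n hn k => ?_⟩
  have hst : H.symm (dy n k) < H.symm (dy n (k + 1)) := H.symm.strictMono (dy_lt n k)
  have emid : dy (n + 1) (2 * k + 1) = dy n k + 1 / 2 ^ (n + 1) := dy_two_add n k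
  have esucc := dy_succ n k
  have ehalf := half_lt n
  -- Otherwise, if the preimage of the interval of level `n + r` at `dy n k` contains the standard
  -- interval `[H.symm (dy n k), y]`, transport to level `n` puts the latter into the left half, so
  -- it lies in the preimage of the interval of level `n + r + 1`. Hence `H y = dy n k`, absurd.
  have left : ∃ y, Std (H.symm (dy n k)) y ∧ y ≤ H.symm (dy n (k + 1)) ∧
      dy (n + 1) (2 * k + 1) < H y := by
    by_contra hc
    have hc' : ∀ y, Std (H.symm (dy n k)) y → y ≤ H.symm (dy n (k + 1)) →
        H y ≤ dy (n + 1) (2 * k + 1) := by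
      intro y h1 h2
      by_contra h3
      exact hc ⟨y, h1, h2, not_le.1 h3⟩
    obtain ⟨m, j, hmj⟩ := hd.2 n k
    obtain ⟨t, ht⟩ := exists_small _ (sub_pos.2 hst)
    have hy : Std (H.symm (dy n k)) (dy (m + t) (j * 2 ^ t + 1)) :=
      ⟨m + t, j * 2 ^ t, by rw [dy_refine, hmj], rfl⟩
    have hyt : dy (m + t) (j * 2 ^ t + 1) ≤ H.symm (dy n (k + 1)) := by
      rw [dy_succ, dy_refine, ← hmj]
      have : (1 : ℝ) / 2 ^ (m + t) ≤ 1 / 2 ^ t := inv_pow_le_iff.2 (by omega)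
      linarith
    generalize dy (m + t) (j * 2 ^ t + 1) = y at hy hyt
    have ind : ∀ r : ℕ, H y ≤ dy n k + 1 / 2 ^ (n + r) := by
      intro r
      induction r with
      | zero =>
        rw [OrderIso.le_symm_apply, esucc] at hyt
        simpa using hyt
      | succ r ih =>
        obtain ⟨p, q, hp, hq⟩ := hy
        have hp' : H (dy p q) = dy n k := by rw [← hp]; simp
        have e0 := dy_refine n r k
        have := hG (n + r) n (by omega) hn (k * 2 ^ r) k p q (by rw [e0, hp'])
          (by rw [← hq, dy_succ, e0]; exact ih)
        rw [hp', ← e0, aff_left, ← hq] at this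
        have e1 : aff (n + r) (k * 2 ^ r) n k (H y) = (H y - dy n k) * 2 ^ r + dy n k := by
          simp only [aff]; rw [e0, pow_add]; field_simp
        have h4 := hc' _ this (by
          apply H.symm.monotone
          rw [e1, esucc]
          have : (H y - dy n k) * 2 ^ r ≤ 1 / 2 ^ (n + r) * 2 ^ r :=
            mul_le_mul_of_nonneg_right (by linarith) (by positivity)
          have e2 : (1 : ℝ) / 2 ^ (n + r) * 2 ^ r = 1 / 2 ^ n := by rw [pow_add]; field_simp
          linarith)
        rw [OrderIso.apply_symm_apply, e1, emid] at h4
        have h5 : (H y - dy n k) * 2 ^ r ≤ 1 / 2 ^ (n + (r + 1)) * 2 ^ r := by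
          have e2 : (1 : ℝ) / 2 ^ (n + (r + 1)) * 2 ^ r = 1 / 2 ^ (n + 1) := by
            simp only [pow_add]; field_simp
          linarith
        have := le_of_mul_le_mul_right h5 (by positivity)
        linarith
    have hpos : dy n k < H y := by
      rw [← OrderIso.symm_apply_lt]; exact std_lt hy
    obtain ⟨r, hr⟩ := exists_small _ (sub_pos.2 hpos)
    have := ind r
    have : (1 : ℝ) / 2 ^ (n + r) ≤ 1 / 2 ^ r := inv_pow_le_iff.2 (by omega)
    linarith
  have right : ∃ x, Std x (H.symm (dy n (k + 1))) ∧ H.symm (dy n k) ≤ x ∧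
      H x < dy (n + 1) (2 * k + 1) := by
    by_contra hc
    have hc' : ∀ x, Std x (H.symm (dy n (k + 1))) → H.symm (dy n k) ≤ x →
        dy (n + 1) (2 * k + 1) ≤ H x := by
      intro x h1 h2
      by_contra h3
      exact hc ⟨x, h1, h2, not_le.1 h3⟩
    obtain ⟨m, j, hmj⟩ := hd.2 n (k + 1)
    obtain ⟨t, ht⟩ := exists_small _ (sub_pos.2 hst)
    have hx : Std (dy (m + t) (j * 2 ^ t - 1)) (H.symm (dy n (k + 1))) :=
      ⟨m + t, j * 2 ^ t - 1, rfl, by rw [sub_add_cancel, dy_refine, hmj]⟩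
    have hxs : H.symm (dy n k) ≤ dy (m + t) (j * 2 ^ t - 1) := by
      have e := dy_succ (m + t) (j * 2 ^ t - 1)
      rw [sub_add_cancel, dy_refine, ← hmj] at e
      have : (1 : ℝ) / 2 ^ (m + t) ≤ 1 / 2 ^ t := inv_pow_le_iff.2 (by omega)
      linarith
    generalize dy (m + t) (j * 2 ^ t - 1) = x at hx hxs
    have ind : ∀ r : ℕ, dy n (k + 1) - 1 / 2 ^ (n + r) ≤ H x := by
      intro r
      induction r with
      | zero =>
        rw [OrderIso.symm_apply_le] at hxs
        rw [esucc]
        simpa using hxs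
      | succ r ih =>
        obtain ⟨p, q, hp, hq⟩ := hx
        have hq' : H (dy p (q + 1)) = dy n (k + 1) := by rw [← hq]; simp
        have e0 : dy (n + r) ((k + 1) * 2 ^ r - 1 + 1) = dy n (k + 1) := by
          rw [sub_add_cancel, dy_refine]
        have e0' := dy_succ (n + r) ((k + 1) * 2 ^ r - 1)
        rw [e0] at e0'
        have := hG (n + r) n (by omega) hn ((k + 1) * 2 ^ r - 1) k p q (by rw [← hp]; linarith)
          (by rw [e0, hq'])
        rw [hq', ← e0, aff_right, ← hp] at this
        have e5 : dy (n + r) ((k + 1) * 2 ^ r - 1) = dy n k + 1 / 2 ^ n - 1 / 2 ^ (n + r) := by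
          linarith
        have e1 : aff (n + r) ((k + 1) * 2 ^ r - 1) n k (H x) =
            (H x - dy n (k + 1)) * 2 ^ r + dy n (k + 1) := by
          simp only [aff]; rw [e5, esucc, pow_add]; field_simp; ring
        have h4 := hc' _ this (by
          apply H.symm.monotone
          rw [e1]
          have : -(1 / 2 ^ (n + r)) * 2 ^ r ≤ (H x - dy n (k + 1)) * 2 ^ r :=
            mul_le_mul_of_nonneg_right (by linarith) (by positivity)
          have e2 : -((1 : ℝ) / 2 ^ (n + r)) * 2 ^ r = -(1 / 2 ^ n) := by rw [pow_add]; field_simp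
          linarith)
        rw [OrderIso.apply_symm_apply, e1, emid] at h4
        have h5 : -(1 / 2 ^ (n + (r + 1))) * 2 ^ r ≤ (H x - dy n (k + 1)) * 2 ^ r := by
          have e2 : -((1 : ℝ) / 2 ^ (n + (r + 1))) * 2 ^ r = -(1 / 2 ^ (n + 1)) := by
            simp only [pow_add]; field_simp
          linarith
        have := le_of_mul_le_mul_right h5 (by positivity)
        linarith
    have hpos : H x < dy n (k + 1) := by
      rw [← OrderIso.lt_symm_apply]; exact std_lt hx
    obtain ⟨r, hr⟩ := exists_small _ (sub_pos.2 hpos)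
    have := ind r
    have : (1 : ℝ) / 2 ^ (n + r) ≤ 1 / 2 ^ r := inv_pow_le_iff.2 (by omega)
    linarith
  obtain ⟨y, hy1, hy2, hy3⟩ := left
  obtain ⟨x, hx1, hx2, hx3⟩ := right
  exact overlap hy1 hx1 hx2 (H.lt_iff_lt.1 (hx3.trans hy3)) hy2

/-! ### Dyadic piecewise linear maps and standard intervals -/

lemma mem_zpows_iff {x : ℝ} : x ∈ zpows 2 ↔ ∃ n k, x = dy n k := by
  constructor
  · rintro ⟨a, b, rfl⟩
    obtain ⟨n, rfl | rfl⟩ := b.eq_nat_or_neg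
    · exact ⟨0, a * 2 ^ n, by simp [dy]⟩
    · exact ⟨n, a, by simp [dy, div_eq_mul_inv]⟩
  · rintro ⟨n, k, rfl⟩
    exact ⟨k, -n, by simp [dy, div_eq_mul_inv]⟩

lemma exists_uniform {α : Type*} {S : Set α} (hS : S.Finite) {P : α → ℕ → Prop}
    (hmono : ∀ x A A', A ≤ A' → P x A → P x A') (h : ∀ x ∈ S, ∃ A, P x A) :
    ∃ A, ∀ x ∈ S, P x A := by
  have : ∀ᶠ A in Filter.atTop, ∀ x ∈ S, P x A := by
    rw [Filter.eventually_all_finite hS]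
    intro x hx
    obtain ⟨A, hA⟩ := h x hx
    filter_upwards [Filter.eventually_ge_atTop A] with A' hA'
    exact hmono x A A' hA' hA
  exact this.exists

/-- Local slopes and constants agree on a whole interval, by the identity theorem for analytic
functions. -/
lemma affine_on_cell {F : ℝ → ℝ} (hF : Continuous F) {a b : ℝ} (hab : a < b)
    (h : ∀ x ∈ Set.Ioo a b, ∃ (k : ℤ) (c : ℝ), ∃ ε > 0, ∀ y : ℝ, |y - x| < ε →
      F y = (2 : ℝ) ^ k * y + c) :
    ∃ (k : ℤ) (c : ℝ), ∀ x ∈ Set.Icc a b, F x = (2 : ℝ) ^ k * x + c := by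
  have hev : ∀ x ∈ Set.Ioo a b, ∃ (k : ℤ) (c : ℝ),
      F =ᶠ[nhds x] fun y => (2 : ℝ) ^ k * y + c := by
    intro x hx
    obtain ⟨k, c, ε, hε, hy⟩ := h x hx
    refine ⟨k, c, ?_⟩
    filter_upwards [Metric.ball_mem_nhds x hε] with y hy'
    exact hy y (by simpa [Real.dist_eq] using hy')
  have han : AnalyticOnNhd ℝ F (Set.Ioo a b) := by
    intro x hx
    obtain ⟨k, c, hk⟩ := hev x hx
    refine AnalyticAt.congr ?_ hk.symm
    exact (analyticAt_const.mul analyticAt_id).add analyticAt_const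
  have hmid : (a + b) / 2 ∈ Set.Ioo a b := ⟨by linarith, by linarith⟩
  obtain ⟨k, c, hk⟩ := hev _ hmid
  refine ⟨k, c, ?_⟩
  have hon : Set.EqOn F (fun y => (2 : ℝ) ^ k * y + c) (Set.Ioo a b) := by
    apply han.eqOn_of_preconnected_of_eventuallyEq _ isPreconnected_Ioo hmid hk
    intro x _
    exact (analyticAt_const.mul analyticAt_id).add analyticAt_const
  have := hon.closure hF (by fun_prop)
  rw [closure_Ioo hab.ne] at this
  exact this

/-- `F` is affine on each interval of the grid `2 ^ (-K) ℤ`, with slopes `2 ^ p / 2 ^ q` and values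
at the grid points in `2 ^ (-A) ℤ`, the exponents and denominators being uniformly bounded. -/
lemma exists_cells {F : ℝ → ℝ} {d : ℕ} (hper : ∀ x, F (x + 1) = F x + d) (hc : Continuous F)
    (hpl : CircPL 2 1 F) (hdy : ∀ q ∈ zpows 2, F q ∈ zpows 2) :
    ∃ K A : ℕ, ∀ j : ℤ, ∃ (p q : ℕ) (b : ℤ), p ≤ A ∧ q ≤ A ∧
      ∀ x, dy K j ≤ x → x ≤ dy K (j + 1) → F x = 2 ^ p / 2 ^ q * (x - dy K j) + b / 2 ^ A := by
  obtain ⟨B, hBfin, hBper, hBdy, hB⟩ := hpl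
  have hBz : ∀ (z : ℤ) x, x ∈ B → x - z ∈ B := by
    intro z
    induction z with
    | zero => simp
    | succ i ih => intro x hx; have := (hBper _ (ih x hx)).2; push_cast; rwa [sub_sub] at this
    | pred i ih =>
      intro x hx
      have := (hBper _ (ih x hx)).1
      rw [show x - ((-(i : ℤ) - 1 : ℤ) : ℝ) = x - ((-(i : ℤ) : ℤ) : ℝ) + 1 by push_cast; ring]
      exact this
  obtain ⟨K, hK⟩ := exists_uniform (P := fun x K => ∃ j, x = dy K j) hBfin
    (by
      rintro x A A' hA ⟨j, rfl⟩
      obtain ⟨t, rfl⟩ := Nat.exists_eq_add_of_le hA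
      exact ⟨_, (dy_refine A t j).symm⟩)
    (fun x hx => mem_zpows_iff.1 (hBdy hx.1))
  have hgrid : ∀ x ∈ B, ∃ j, x = dy K j := by
    intro x hx
    obtain ⟨j, hj⟩ := hK (x - ⌊x⌋) ⟨hBz _ _ hx, by
      have := Int.floor_le x; have := Int.lt_floor_add_one x
      constructor <;> linarith⟩
    refine ⟨j + ⌊x⌋ * 2 ^ K, ?_⟩
    have : x = dy K j + ⌊x⌋ := by linarith
    refine this.trans ?_
    simp only [dy]; push_cast; field_simp
  have hcell : ∀ j : ℤ, ∃ A : ℕ, ∃ (p q : ℕ) (b : ℤ), p ≤ A ∧ q ≤ A ∧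
      ∀ x, dy K j ≤ x → x ≤ dy K (j + 1) → F x = 2 ^ p / 2 ^ q * (x - dy K j) + b / 2 ^ A := by
    intro j
    obtain ⟨k, c, hkc⟩ := affine_on_cell hc (dy_lt K j) (by
      intro x hx
      apply hB
      intro hxB
      obtain ⟨i, rfl⟩ := hgrid x hxB
      obtain ⟨h1, h2⟩ := hx
      simp only [dy] at h1 h2
      rw [div_lt_div_iff_of_pos_right (by positivity)] at h1 h2
      have h3 : j < i := by exact_mod_cast h1
      have h4 : i < j + 1 := by exact_mod_cast h2
      omega)
    obtain ⟨n, b, hnb⟩ := mem_zpows_iff.1 (hdy _ (mem_zpows_iff.2 ⟨K, j, rfl⟩))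
    have hslope : ∃ p q : ℕ, (2 : ℝ) ^ k = 2 ^ p / 2 ^ q := by
      obtain ⟨m, rfl | rfl⟩ := k.eq_nat_or_neg
      · exact ⟨m, 0, by simp⟩
      · exact ⟨0, m, by simp⟩
    obtain ⟨p, q, hpq⟩ := hslope
    refine ⟨n + (p + q), p, q, b * 2 ^ (p + q), by omega, by omega, fun x h1 h2 => ?_⟩
    have e1 := hkc x ⟨h1, h2⟩
    have e2 := hkc (dy K j) ⟨le_rfl, (dy_lt K j).le⟩
    have e3 := dy_refine n (p + q) b
    rw [← hnb] at e3
    have e4 : ((b * 2 ^ (p + q) : ℤ) : ℝ) / 2 ^ (n + (p + q)) = F (dy K j) := e3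
    rw [e4, e2, e1, ← hpq]; ring
  obtain ⟨A, hA⟩ := exists_uniform (Set.finite_Ico (0 : ℤ) (2 ^ K))
    (P := fun j A => ∃ (p q : ℕ) (b : ℤ), p ≤ A ∧ q ≤ A ∧
      ∀ x, dy K j ≤ x → x ≤ dy K (j + 1) → F x = 2 ^ p / 2 ^ q * (x - dy K j) + b / 2 ^ A)
    (by
      rintro j A A' hA ⟨p, q, b, hp, hq, h⟩
      obtain ⟨t, rfl⟩ := Nat.exists_eq_add_of_le hA
      refine ⟨p, q, b * 2 ^ t, by omega, by omega, fun x h1 h2 => ?_⟩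
      rw [h x h1 h2]
      have := dy_refine A t b
      simp only [dy] at this ⊢
      rw [this])
    (fun j _ => hcell j)
  refine ⟨K, A, fun j => ?_⟩
  have hz : ∀ (z : ℤ) x, F (x + z) = F x + z * d := by
    intro z x
    have hp : Function.Periodic (fun x => F x - x * d) 1 := by
      intro x; simp only [hper]; ring
    have := hp.int_mul z x
    simp only [mul_one] at this
    linarith
  obtain ⟨p, q, b, hp, hq, h⟩ := hA (j % 2 ^ K)
    ⟨Int.emod_nonneg _ (by positivity), Int.emod_lt_of_pos _ (by positivity)⟩
  have hdj : ∀ i : ℤ, dy K (j % 2 ^ K + i) = dy K (j + i) - ((j / 2 ^ K : ℤ) : ℝ) := by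
    intro i
    have e : (j + i : ℤ) = j % 2 ^ K + i + 2 ^ K * (j / 2 ^ K) := by
      have := Int.mul_ediv_add_emod j (2 ^ K); omega
    rw [e]; simp only [dy]; push_cast; field_simp; ring
  have hdj0 := hdj 0
  rw [add_zero, add_zero] at hdj0
  refine ⟨p, q, b + (j / 2 ^ K) * d * 2 ^ A, hp, hq, fun x h1 h2 => ?_⟩
  have := h (x - ((j / 2 ^ K : ℤ) : ℝ)) (by rw [hdj0]; linarith) (by rw [hdj]; linarith)
  have e := hz (j / 2 ^ K) (x - ((j / 2 ^ K : ℤ) : ℝ))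
  rw [sub_add_cancel, this, hdj0] at e
  rw [e]; push_cast; field_simp; ring

/-- A map with the dyadic affine pieces of `exists_cells`, and its inverse, carry short standard
intervals to standard intervals. -/
lemma exists_deep_std {F : ℝ → ℝ} (hF : StrictMono F) {K A : ℕ}
    (hcell : ∀ j : ℤ, ∃ (p q : ℕ) (b : ℤ), p ≤ A ∧ q ≤ A ∧
      ∀ x, dy K j ≤ x → x ≤ dy K (j + 1) → F x = 2 ^ p / 2 ^ q * (x - dy K j) + b / 2 ^ A) :
    ∃ N, ∀ n, N ≤ n → ∀ k : ℤ, Std (F (dy n k)) (F (dy n (k + 1))) ∧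
      ∀ x y, F x = dy n k → F y = dy n (k + 1) → Std x y := by
  refine ⟨K + 2 * A, fun n hn k => ⟨?_, ?_⟩⟩
  · obtain ⟨t, rfl⟩ := Nat.exists_eq_add_of_le (show K ≤ n by omega)
    obtain ⟨s, hs0, hs1, j, rfl⟩ : ∃ s : ℤ, 0 ≤ s ∧ s < 2 ^ t ∧ ∃ j, k = j * 2 ^ t + s :=
      ⟨k % 2 ^ t, Int.emod_nonneg _ (by positivity), Int.emod_lt_of_pos _ (by positivity),
        k / 2 ^ t, by rw [mul_comm]; exact (Int.mul_ediv_add_emod k (2 ^ t)).symm⟩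
    obtain ⟨p, q, b, hp, hq, h⟩ := hcell j
    obtain ⟨g1, g2⟩ := dy_refine_le K t j s hs0 hs1
    have g3 := dy_lt (K + t) (j * 2 ^ t + s)
    obtain ⟨u, hu⟩ := Nat.exists_eq_add_of_le (show A + p ≤ K + t by omega)
    have e1 : ∀ s : ℤ, 2 ^ p / 2 ^ q * (dy (K + t) (j * 2 ^ t + s) - dy K j) + b / 2 ^ A =
        dy (A + u + q) (s + b * 2 ^ (u + q)) := by
      intro s
      rw [← dy_refine K t j]
      have : dy (K + t) (j * 2 ^ t + s) - dy (K + t) (j * 2 ^ t) = s / 2 ^ (K + t) := by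
        simp only [dy]; push_cast; ring
      rw [this, hu]
      simp only [dy]; push_cast; simp only [pow_add]; field_simp
    refine ⟨A + u + q, s + b * 2 ^ (u + q), ?_, ?_⟩
    · rw [h _ g1 (g3.le.trans g2), e1]
    · rw [h _ (g1.trans g3.le) g2, add_assoc (j * 2 ^ t) s 1, e1]
      congr 1; ring
  · intro x y hx hy
    obtain ⟨j, hj1, hj2⟩ : ∃ j, dy K j ≤ x ∧ x < dy K (j + 1) := by
      refine ⟨⌊x * 2 ^ K⌋, ?_, ?_⟩
      · simp only [dy]; rw [div_le_iff₀ (by positivity)]; exact Int.floor_le _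
      · simp only [dy]; rw [lt_div_iff₀ (by positivity)]; push_cast; exact Int.lt_floor_add_one _
    obtain ⟨p, q, b, hp, hq, h⟩ := hcell j
    have e1 := h x hj1 hj2.le
    rw [hx] at e1
    obtain ⟨u, rfl⟩ := Nat.exists_eq_add_of_le (show A ≤ n by omega)
    obtain ⟨v, hv⟩ := Nat.exists_eq_add_of_le (show K + q ≤ A + u + p by omega)
    have e2 : x = dy (K + v) (j * 2 ^ v + (k - b * 2 ^ u)) := by
      have e3 : x - dy K j = (k / 2 ^ (A + u) - b / 2 ^ A) * (2 ^ q / 2 ^ p) := by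
        simp only [dy] at e1
        rw [e1]; simp only [dy]; field_simp; ring
      have e4 : (2 : ℝ) ^ K * 2 ^ q * 2 ^ v = 2 ^ A * 2 ^ u * 2 ^ p := by
        rw [← pow_add, ← pow_add, hv.symm, pow_add, pow_add]
      have e5 : x = dy K j + (k / 2 ^ (A + u) - b / 2 ^ A) * (2 ^ q / 2 ^ p) := by linarith
      have e6 : ((2 : ℝ) ^ q / 2 ^ p) = 2 ^ A * 2 ^ u / (2 ^ K * 2 ^ v) := by
        rw [div_eq_div_iff (by positivity) (by positivity)]; linarith
      rw [e5, e6]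
      simp only [dy]; push_cast; simp only [pow_add]; field_simp
    have e3 : dy (K + v) (j * 2 ^ v + (k - b * 2 ^ u) + 1) ≤ dy K (j + 1) := by
      rw [e2, ← dy_refine K v (j + 1)] at hj2
      rw [← dy_refine K v (j + 1)]
      simp only [dy] at hj2 ⊢
      rw [div_lt_div_iff_of_pos_right (by positivity)] at hj2
      apply div_le_div_of_nonneg_right _ (by positivity)
      have : j * 2 ^ v + (k - b * 2 ^ u) < (j + 1) * 2 ^ v := by exact_mod_cast hj2
      exact_mod_cast this
    have e4 := dy_succ (K + v) (j * 2 ^ v + (k - b * 2 ^ u))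
    have e5 : (0 : ℝ) < 1 / 2 ^ (K + v) := by positivity
    have e6 := h _ (by linarith) e3
    have e7 : F (dy (K + v) (j * 2 ^ v + (k - b * 2 ^ u) + 1)) = F y := by
      have e8 : (2 : ℝ) ^ p / 2 ^ q * (1 / 2 ^ (K + v)) = 1 / 2 ^ (A + u) := by
        have e4 : (2 : ℝ) ^ K * 2 ^ q * 2 ^ v = 2 ^ A * 2 ^ u * 2 ^ p := by
          rw [← pow_add, ← pow_add, hv.symm, pow_add, pow_add]
        rw [pow_add, pow_add]; field_simp; linarith
      have e9 := dy_succ (A + u) k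
      rw [hy, e6, e4, ← e2, e9, e1, ← e8]; ring
    rw [← hF.injective e7]
    exact ⟨_, _, e2, rfl⟩

lemma Std.add_int {x y : ℝ} (h : Std x y) (z : ℤ) : Std (x + z) (y + z) := by
  obtain ⟨n, k, rfl, rfl⟩ := h
  refine ⟨n, k + z * 2 ^ n, ?_, ?_⟩ <;> (simp only [dy]; push_cast; field_simp)
  ring

lemma coe_eq_coe_iff {x y : ℝ} :
    (x : AddCircle (1 : ℝ)) = (y : AddCircle (1 : ℝ)) ↔ ∃ z : ℤ, x = y + z := by
  rw [← sub_eq_zero, ← AddCircle.coe_sub, AddCircle.coe_eq_zero_iff]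
  constructor
  · rintro ⟨z, hz⟩
    exact ⟨z, by simp at hz; linarith⟩
  · rintro ⟨z, hz⟩
    exact ⟨z, by simp [hz]⟩

lemma doublingStd_of_memTbar {h h' : AddCircle (1 : ℝ) → AddCircle (1 : ℝ)} {H : ℝ ≃o ℝ}
    (hl : ∀ x : ℝ, h x = (H x : ℝ)) (hl' : ∀ x : ℝ, h' x = (H.symm x : ℝ))
    (hconj : MemTbar 2 1 (h' ∘ nu2 ∘ h)) : DoublingStd H := by
  obtain ⟨G, d, -, hG, hper, hmono, hcont, hpl, hdy⟩ := hconj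
  have hz : ∀ x, ∃ z : ℤ, G x = H.symm (2 * H x) + z := by
    intro x
    rw [← coe_eq_coe_iff, ← hG]
    simp only [Function.comp, nu2]
    rw [hl, ← AddCircle.coe_add, hl', two_mul]
  -- Two lifts of the same circle map differ by a continuous integer-valued function.
  choose z hz using hz
  have hzc : Continuous z := by
    rw [Int.isClosedEmbedding_coe_real.isEmbedding.continuous_iff]
    have : (fun x => ((z x : ℤ) : ℝ)) = fun x => G x - H.symm (2 * H x) := by
      funext x; rw [hz]; ring
    change Continuous (fun x => ((z x : ℤ) : ℝ))
    rw [this]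
    exact hcont.sub (H.symm.continuous.comp (continuous_const.mul H.continuous))
  have hconst : ∀ x, z x = z 0 := fun x => PreconnectedSpace.constant inferInstance hzc
  obtain ⟨K, A, hcell⟩ := exists_cells (d := d) (by simpa using hper) hcont hpl hdy
  obtain ⟨N, hN⟩ := exists_deep_std hmono hcell
  refine ⟨N, fun n hn k => ⟨?_, ?_⟩⟩
  · have := (hN n hn k).1.add_int (-z 0)
    rw [hz, hz, hconst, hconst (dy n (k + 1))] at this
    simpa using this
  · have e : ∀ k : ℤ, G (H.symm (H (dy n k) / 2)) = dy n (k + z 0 * 2 ^ n) := by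
      intro k
      rw [hz, hconst]
      simp only [OrderIso.apply_symm_apply]
      rw [mul_div_cancel₀ _ (two_ne_zero), OrderIso.symm_apply_apply]
      simp only [dy]; push_cast; field_simp
    refine (hN n hn (k + z 0 * 2 ^ n)).2 _ _ (e k) ?_
    rw [e]; congr 1; ring

/-- If the inverse of `H` carries all short standard intervals to standard intervals, it is affine
on each of them, and so is `H` on their preimages. -/
lemma affine_of_symm_std {H : ℝ ≃o ℝ} {K : ℕ}
    (h : ∀ n, K ≤ n → ∀ k, Std (H.symm (dy n k)) (H.symm (dy n (k + 1)))) (k : ℤ) :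
    ∃ m c m' c' : ℝ, (∀ x, dy K k ≤ x → x ≤ dy K (k + 1) → H.symm x = m * x + c) ∧
      ∀ y, H.symm (dy K k) ≤ y → y ≤ H.symm (dy K (k + 1)) → H y = m' * y + c' := by
  obtain ⟨n', k', e1, e2⟩ := h K le_rfl k
  have := affine_of_std H.symm.strictMono e1 e2
    (fun m j h1 h2 => h m (level_le h1 h2) j)
  refine ⟨2 ^ K / 2 ^ n', dy n' k' - dy K k * (2 ^ K / 2 ^ n'), 2 ^ n' / 2 ^ K,
    dy K k - dy n' k' * (2 ^ n' / 2 ^ K), fun x h1 h2 => ?_, fun y h1 h2 => ?_⟩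
  · rw [this x h1 h2]; simp only [aff]; ring
  · rw [OrderIso.symm_apply_le] at h1
    rw [OrderIso.le_symm_apply] at h2
    have e := this _ h1 h2
    rw [OrderIso.symm_apply_apply] at e
    have e3 : aff n' k' K k y = H y := by
      conv_lhs => rw [e]
      rw [aff_comp, aff_self]
    rw [← e3]; simp only [aff]; ring

/-! ### Passage between the circle and the line -/

/-- A map affine between consecutive points of the transported grid `φ (2 ^ (-K) ℤ)` is piecewise
linear. -/
lemma pl_of_grid {F : ℝ → ℝ} {φ : ℝ ≃o ℝ} (hφ : ∀ x, φ (x + 1) = φ x + 1) {K : ℕ}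
    (haff : ∀ k : ℤ, ∃ m c : ℝ, ∀ x, φ (dy K k) ≤ x → x ≤ φ (dy K (k + 1)) → F x = m * x + c) :
    ∃ B : Set ℝ, (B ∩ Set.Ico (0 : ℝ) 1).Finite ∧ (∀ x ∈ B, x + 1 ∈ B ∧ x - 1 ∈ B) ∧
      ∀ x ∉ B, ∃ (m c : ℝ), ∃ ε > 0, ∀ y : ℝ, |y - x| < ε → F y = m * y + c := by
  have hadd : ∀ k : ℤ, dy K (k + 2 ^ K) = dy K k + 1 := by
    intro k; simp only [dy]; push_cast; field_simp
  have hcell : ∀ x : ℝ, ∃ k : ℤ, φ (dy K k) ≤ x ∧ x < φ (dy K (k + 1)) := by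
    intro x
    refine ⟨⌊φ.symm x * 2 ^ K⌋, ?_, ?_⟩
    · rw [← OrderIso.le_symm_apply, dy, div_le_iff₀ (by positivity)]; exact Int.floor_le _
    · rw [← OrderIso.symm_apply_lt, dy, lt_div_iff₀ (by positivity)]
      push_cast; exact Int.lt_floor_add_one _
  refine ⟨Set.range fun k : ℤ => φ (dy K k), ?_, ?_, ?_⟩
  · apply ((Set.finite_Icc ⌊φ.symm 0 * 2 ^ K⌋ ⌈φ.symm 1 * 2 ^ K⌉).image
      fun k : ℤ => φ (dy K k)).subset
    rintro _ ⟨⟨k, rfl⟩, h0, h1⟩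
    refine ⟨k, ⟨?_, ?_⟩, rfl⟩
    · replace h0 : 0 ≤ φ (dy K k) := h0
      rw [← OrderIso.symm_apply_le, dy, le_div_iff₀ (by positivity)] at h0
      exact_mod_cast (Int.floor_le _).trans h0
    · replace h1 : φ (dy K k) < 1 := h1
      rw [← OrderIso.lt_symm_apply, dy, div_lt_iff₀ (by positivity)] at h1
      exact_mod_cast h1.le.trans (Int.le_ceil _)
  · rintro _ ⟨k, rfl⟩
    refine ⟨⟨k + 2 ^ K, ?_⟩, ⟨k - 2 ^ K, ?_⟩⟩
    · simp only [hadd, hφ]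
    · have := hφ (dy K (k - 2 ^ K))
      rw [← hadd, sub_add_cancel] at this
      simp only [this]; ring
  · intro x hx
    obtain ⟨k, h1, h2⟩ := hcell x
    have h1' : φ (dy K k) < x := lt_of_le_of_ne h1 fun h => hx ⟨k, h⟩
    obtain ⟨m, c, hmc⟩ := haff k
    refine ⟨m, c, min (x - φ (dy K k)) (φ (dy K (k + 1)) - x), by
      rw [gt_iff_lt, lt_min_iff]; constructor <;> linarith, fun y hy => ?_⟩
    rw [lt_min_iff, abs_lt, abs_lt] at hy
    exact hmc y (by linarith [hy.1.1]) (by linarith [hy.2.2])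

lemma dyadicPres_of_image {h : AddCircle (1 : ℝ) → AddCircle (1 : ℝ)} {H : ℝ ≃o ℝ}
    (hH : ∀ x, H (x + 1) = H x + 1)
    (hl : ∀ x : ℝ, h x = (H x : ℝ)) (hdy : h '' dyadicCircle = dyadicCircle) : DyadicPres H := by
  have hint : ∀ n k (z : ℤ), ∃ n' k', dy n k + z = dy n' k' := by
    intro n k z
    refine ⟨n, k + z * 2 ^ n, ?_⟩
    simp only [dy]; push_cast; field_simp
  constructor
  · intro n k
    have : h (dy n k : ℝ) ∈ dyadicCircle := by
      rw [← hdy]; exact ⟨_, ⟨dy n k, mem_zpows_iff.2 ⟨n, k, rfl⟩, rfl⟩, rfl⟩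
    obtain ⟨q, hq, e⟩ := this
    rw [hl, coe_eq_coe_iff] at e
    obtain ⟨z, hz⟩ := e
    obtain ⟨n', k', rfl⟩ := mem_zpows_iff.1 hq
    rw [hz]; exact hint _ _ _
  · intro n k
    have : ((dy n k : ℝ) : AddCircle (1 : ℝ)) ∈ h '' dyadicCircle := by
      rw [hdy]; exact ⟨dy n k, mem_zpows_iff.2 ⟨n, k, rfl⟩, rfl⟩
    obtain ⟨_, ⟨q, hq, rfl⟩, e⟩ := this
    rw [hl, eq_comm, coe_eq_coe_iff] at e
    obtain ⟨z, hz⟩ := e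
    obtain ⟨n', k', rfl⟩ := mem_zpows_iff.1 hq
    have hper : H (dy n' k' + z) = H (dy n' k') + z := by
      have hp : Function.Periodic (fun x => H x - x) 1 := by
        intro x; simp only [hH]; ring
      have := hp.int_mul z (dy n' k')
      simp only [mul_one] at this
      linarith
    rw [hz, ← hper, OrderIso.symm_apply_apply]
    exact hint _ _ _

end DyadicConj

/-- **Theorem 3.** If `h` is an orientation-preserving homeomorphism of
`S¹` with `h(ℤ[1/2]) = ℤ[1/2]` such that `h ν₂ h⁻¹` and `h⁻¹ ν₂ h` are both
everywhere-defined elements of `T̄_{2,1}`, then `h` is piecewise linear: there is a finite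
subset of `S¹` (a periodic break set, finite in each period, for a lift `H` of `h`) off
which `h` is locally affine. -/
theorem stmt_12 (h h' : AddCircle (1 : ℝ) → AddCircle (1 : ℝ))
    (hh : OrientedHomeo 1 h)
    (hinv₁ : ∀ z, h' (h z) = z) (hinv₂ : ∀ z, h (h' z) = z)
    (hdy : h '' dyadicCircle = dyadicCircle)
    (hconj₁ : MemTbar 2 1 (h ∘ nu2 ∘ h'))
    (hconj₂ : MemTbar 2 1 (h' ∘ nu2 ∘ h)) :
    ∃ H : ℝ → ℝ,
      (∀ x : ℝ, h ((x : ℝ) : AddCircle (1 : ℝ)) = ((H x : ℝ) : AddCircle (1 : ℝ))) ∧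
      (∀ x : ℝ, H (x + 1) = H x + 1) ∧ StrictMono H ∧ Function.Surjective H ∧
      ∃ B : Set ℝ, (B ∩ Set.Ico (0 : ℝ) 1).Finite ∧ (∀ x ∈ B, x + 1 ∈ B ∧ x - 1 ∈ B) ∧
        ∀ x ∉ B, ∃ (m c : ℝ), ∃ ε > 0, ∀ y : ℝ, |y - x| < ε → H y = m * y + c := by
  obtain ⟨H₀, hl₀, hper₀, hmono, hsurj⟩ := hh
  obtain ⟨H, hH⟩ : ∃ H : ℝ ≃o ℝ, ∀ x, H x = H₀ x :=
    ⟨StrictMono.orderIsoOfSurjective H₀ hmono hsurj, fun _ => rfl⟩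
  refine ⟨H₀, hl₀, hper₀, hmono, hsurj, ?_⟩
  have hl : ∀ x : ℝ, h x = (H x : ℝ) := fun x => by rw [hl₀, hH]
  have hper : ∀ x, H (x + 1) = H x + 1 := fun x => by rw [hH, hH, hper₀]
  have hl' : ∀ x : ℝ, h' x = (H.symm x : ℝ) := fun x => by
    rw [← hinv₁ (H.symm x : ℝ), hl, OrderIso.apply_symm_apply]
  have hper' : ∀ x, H.symm (x + 1) = H.symm x + 1 := fun x => by
    rw [OrderIso.symm_apply_eq, hper, OrderIso.apply_symm_apply]
  have hd := DyadicConj.dyadicPres_of_image hper hl hdy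
  have hD := DyadicConj.doublingStd_of_memTbar hl hl' hconj₂
  have hD' : DyadicConj.DoublingStd H.symm := DyadicConj.doublingStd_of_memTbar hl' hl hconj₁
  rcases DyadicConj.memory_zero hper hd (DyadicConj.exists_memory hper hD)
    (DyadicConj.exists_memory hper' hD') with h0 | h0
  · obtain ⟨K, hK⟩ := DyadicConj.std_of_memory_zero hd h0
    refine DyadicConj.pl_of_grid hper' (K := K) fun k => ?_
    obtain ⟨-, -, m, c, -, hmc⟩ := DyadicConj.affine_of_symm_std hK k
    exact ⟨m, c, fun x h1 h2 => by rw [← hH, hmc x h1 h2]⟩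
  · obtain ⟨K, hK⟩ := DyadicConj.std_of_memory_zero hd.symm h0
    refine DyadicConj.pl_of_grid (φ := OrderIso.refl ℝ) (fun _ => rfl) (K := K) fun k => ?_
    obtain ⟨m, c, -, -, hmc, -⟩ := DyadicConj.affine_of_symm_std hK k
    exact ⟨m, c, fun x h1 h2 => by rw [← hH]; exact hmc x h1 h2⟩
end
end

section
/- Every homeomorphism h : ℝ → ℝ satisfying h · BPL₂(ℝ) · h⁻¹ = BPL₂(ℝ) belongs to P̃L₂(ℝ); that is, any normalizer of BPL₂(ℝ) in Homeo(ℝ) is piecewise linear with all breaks in ℤ[1/2], all slopes equal to ± an integral power of 2, and maps ℤ[1/2] onto ℤ[1/2]. -/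
/-!
Normalizers of `BPL₂(ℝ)` are piecewise linear.

Call `[i / 2 ^ j, (i + 1) / 2 ^ j]` a standard interval. Let `h` be an increasing normalizer with
inverse `g`. Since the dyadic rationals are exactly the possible breaks of elements of `BPL₂(ℝ)`,
both `h` and `g` preserve them (`Nrm.dyadic`). The main step is to find one standard interval on
which `h` is affine.

For a standard interval `I`, the pattern `S h I` is the set of `h`-images of standard intervals that
lie in `I`, read in the affine coordinate of `I`. Fix a standard root interval `R`. The contractions
of `R` by a factor of two towards either endpoint extend to elements of `BPL₂(ℝ)`, and so do their
conjugates by `h`. Elements of `BPL₂(ℝ)` carry all sufficiently small standard intervals to standard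
intervals, hence patterns deep inside `R` are invariant under both contractions (`S_contract`). In
terms of binary digits, the contractions insert a leading digit, so a deep pattern depends only on
finitely many final digits of the address of `I` in `R` (`Nrm.exists_mem`). Say that `h` has
memory `n` if `n` digits suffice.

Apply this to `g` as well, and take its memory `m'` to be minimal. If `m' = m + 1`, then patterns of
`g` determine whether a standard interval is a left or a right half (`parity_of_S_eq`). This is what
is needed to glue: if `h` has equal patterns on the two halves of `I` and on those of `I'`, then
every standard interval with `h`-image in `I` is cut into pieces, each conjugated by `h` to a piece
for `I'`. The patterns of `g` on corresponding pieces agree, so left halves match left halves and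
right halves match right halves, and the pieces reassemble to a standard interval
(`S_subset_of_halves`). Thus memory `n + 1` of `h` implies memory `n` (`Mem.descend`), and `h` has
memory `0`.

If `h` has memory `0`, all deep patterns agree. An `h`-image of a standard interval that straddles
the midpoint of a standard interval `I` without filling `I` could be copied to a small interval
whose midpoint is an endpoint of that image, giving two crossing standard intervals, which is
impossible. Hence deep `h`-images of standard intervals are standard (`toCone_of_mem_zero`), and an
increasing map with this property is affine (`affine_of_toCone`). If instead `m' = 0`, this argument
applies to `g`, and `h` is affine as well.

Finally, local affinity is carried from one place to the whole line by contractions in `BPL₂(ℝ)`,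
whose conjugates are again piecewise linear (`Nrm.transport`, `Nrm.loc`), and the orientation
reversing case reduces to the increasing one by composing with `x ↦ -x`.
-/

noncomputable section

/-- `B` is a discrete subset of `ℝ`: every point of `ℝ` has a neighborhood containing
at most one point of `B`. -/
def LocDiscrete (B : Set ℝ) : Prop := ∀ x : ℝ, ∃ ε > 0, ∀ y ∈ B, |y - x| < ε → y = x

/-- Membership in `PLₙ(ℝ)`: an orientation-preserving homeomorphism of `ℝ`
(equivalently, a strictly monotone surjection), piecewise linear with breaks in a
discrete subset of `ℤ[1/n]`, all slopes integral powers of `n`, and mapping `ℤ[1/n]`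
into itself. -/
def MemPL (n : ℕ) (f : ℝ → ℝ) : Prop :=
  StrictMono f ∧ Function.Surjective f ∧
  (∃ B : Set ℝ, B ⊆ zpows n ∧ LocDiscrete B ∧
    ∀ x ∉ B, ∃ (k : ℤ) (c : ℝ), ∃ ε > 0, ∀ y : ℝ, |y - x| < ε → f y = (n : ℝ) ^ k * y + c) ∧
  (∀ q ∈ zpows n, f q ∈ zpows n)

/-- Membership in `BPLₙ(ℝ)`: elements of `PLₙ(ℝ)` with bounded support. -/
def MemBPL (n : ℕ) (f : ℝ → ℝ) : Prop :=
  MemPL n f ∧ ∃ M : ℝ, ∀ x : ℝ, M < |x| → f x = x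

/-- Membership in `P̃Lₙ(ℝ)`: as `PLₙ(ℝ)` but allowing orientation-reversing elements,
so slopes are `± nᵏ`. -/
def MemPLt (n : ℕ) (f : ℝ → ℝ) : Prop :=
  (StrictMono f ∨ StrictAnti f) ∧ Function.Surjective f ∧
  (∃ B : Set ℝ, B ⊆ zpows n ∧ LocDiscrete B ∧
    ∀ x ∉ B, ∃ (k : ℤ) (s c : ℝ), (s = (n : ℝ) ^ k ∨ s = -((n : ℝ) ^ k)) ∧
      ∃ ε > 0, ∀ y : ℝ, |y - x| < ε → f y = s * y + c) ∧
  (∀ q ∈ zpows n, f q ∈ zpows n)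

/-! ### Dyadic points and standard intervals -/

/-- The dyadic point `i / 2 ^ j`; the standard dyadic interval `(j, i)` is
`[dy j i, dy j (i + 1)]`. Negative levels `j` are allowed. -/
def dy (j i : ℤ) : ℝ := (i : ℝ) / 2 ^ j

lemma two_zpow_pos (j : ℤ) : (0 : ℝ) < 2 ^ j := zpow_pos (by norm_num) j

lemma dy_lift (j i : ℤ) (n : ℕ) : dy j i = dy (j + n) (i * 2 ^ n) := by
  unfold dy
  rw [zpow_add₀ (by norm_num), zpow_natCast]
  have := two_zpow_pos j
  push_cast
  field_simp

lemma dy_le {j a b : ℤ} : dy j a ≤ dy j b ↔ a ≤ b := by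
  unfold dy
  rw [div_le_div_iff_of_pos_right (two_zpow_pos j)]
  exact_mod_cast Iff.rfl

lemma dy_lt {j a b : ℤ} : dy j a < dy j b ↔ a < b := by
  rw [← not_le, dy_le, not_le]

lemma dy_succ (j i : ℤ) : dy j (i + 1) = dy j i + 1 / 2 ^ j := by
  unfold dy; push_cast; ring

lemma dy_lt_succ (j i : ℤ) : dy j i < dy j (i + 1) := dy_lt.2 (by omega)

lemma mem_zpows_iff {x : ℝ} : x ∈ zpows 2 ↔ ∃ j i : ℤ, x = dy j i := by
  constructor
  · rintro ⟨a, b, rfl⟩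
    exact ⟨-b, a, by simp [dy]⟩
  · rintro ⟨j, i, rfl⟩
    exact ⟨i, -j, by simp [dy, div_eq_mul_inv]⟩

lemma dy_mem (j i : ℤ) : dy j i ∈ zpows 2 := mem_zpows_iff.2 ⟨j, i, rfl⟩

lemma exists_common {x y : ℝ} (hx : x ∈ zpows 2) (hy : y ∈ zpows 2) :
    ∃ j a b : ℤ, x = dy j a ∧ y = dy j b := by
  obtain ⟨j, a, rfl⟩ := mem_zpows_iff.1 hx
  obtain ⟨k, b, rfl⟩ := mem_zpows_iff.1 hy
  rcases le_total j k with h | h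
  · obtain ⟨n, rfl⟩ := Int.le.dest h
    exact ⟨_, _, _, dy_lift j a n, rfl⟩
  · obtain ⟨n, rfl⟩ := Int.le.dest h
    exact ⟨_, _, _, rfl, dy_lift k b n⟩

lemma zpows_add {x y : ℝ} (hx : x ∈ zpows 2) (hy : y ∈ zpows 2) : x + y ∈ zpows 2 := by
  obtain ⟨j, a, b, rfl, rfl⟩ := exists_common hx hy
  exact mem_zpows_iff.2 ⟨j, a + b, by unfold dy; push_cast; ring⟩

lemma zpows_neg {x : ℝ} (hx : x ∈ zpows 2) : -x ∈ zpows 2 := by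
  obtain ⟨j, a, rfl⟩ := mem_zpows_iff.1 hx
  exact mem_zpows_iff.2 ⟨j, -a, by unfold dy; push_cast; ring⟩

lemma zpows_neg_iff {x : ℝ} : -x ∈ zpows 2 ↔ x ∈ zpows 2 :=
  ⟨fun h => by simpa using zpows_neg h, zpows_neg⟩

lemma zpows_sub {x y : ℝ} (hx : x ∈ zpows 2) (hy : y ∈ zpows 2) : x - y ∈ zpows 2 := by
  rw [sub_eq_add_neg]; exact zpows_add hx (zpows_neg hy)

lemma zpows_mul {x : ℝ} (hx : x ∈ zpows 2) (k : ℤ) : 2 ^ k * x ∈ zpows 2 := by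
  obtain ⟨j, a, rfl⟩ := mem_zpows_iff.1 hx
  refine mem_zpows_iff.2 ⟨j - k, a, ?_⟩
  unfold dy
  rw [zpow_sub₀ (by norm_num)]
  have := two_zpow_pos j
  have := two_zpow_pos k
  field_simp

lemma zpows_two_mul {x : ℝ} (hx : x ∈ zpows 2) : 2 * x ∈ zpows 2 := by
  simpa using zpows_mul hx 1

lemma zpows_half {x : ℝ} (hx : x ∈ zpows 2) : x / 2 ∈ zpows 2 := by
  have := zpows_mul hx (-1)
  rw [zpow_neg_one] at this
  rwa [div_eq_inv_mul]

/-- Two standard dyadic intervals never cross. -/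
lemma not_cross (j i j' i' : ℤ) (h1 : dy j i < dy j' i') (h2 : dy j' i' < dy j (i + 1))
    (h3 : dy j (i + 1) < dy j' (i' + 1)) : False := by
  rcases le_total j j' with h | h
  · obtain ⟨n, rfl⟩ := Int.le.dest h
    rw [dy_lift j (i + 1) n, dy_lt] at h2 h3
    omega
  · obtain ⟨n, rfl⟩ := Int.le.dest h
    rw [dy_lift j' i' n, dy_lt] at h1 h2
    omega

/-- If one standard dyadic interval contains another, its level is at most the other level. -/
lemma level_le {j i j' i' : ℤ} (h1 : dy j i ≤ dy j' i') (h2 : dy j' (i' + 1) ≤ dy j (i + 1)) :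
    j ≤ j' := by
  rw [dy_succ] at h2
  rw [dy_succ] at h2
  have h3 : (1 : ℝ) / 2 ^ j' ≤ 1 / 2 ^ j := by linarith
  rw [one_div_le_one_div (two_zpow_pos _) (two_zpow_pos _)] at h3
  exact (zpow_le_zpow_iff_right₀ (by norm_num)).1 h3

/-- A dyadic point strictly inside a standard interval is the midpoint of a standard
subinterval: in base two every vertex is the midpoint of a unique standard interval. -/
lemma midcone (N : ℕ) : ∀ (k q l : ℤ), l * 2 ^ N < q → q < (l + 1) * 2 ^ N →
    ∃ (n : ℕ) (t : ℤ), dy (k + N) q = dy (k + n + 1) (2 * t + 1) ∧ l * 2 ^ n ≤ t ∧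
      t + 1 ≤ (l + 1) * 2 ^ n := by
  induction N with
  | zero => intro k q l h1 h2; simp at h1 h2; omega
  | succ N ih =>
    intro k q l h1 h2
    rw [pow_succ] at h1 h2
    rcases Int.even_or_odd' q with ⟨t, rfl | rfl⟩
    · obtain ⟨n, t', h3, h4⟩ := ih k t l (by nlinarith) (by nlinarith)
      refine ⟨n, t', ?_, h4⟩
      rw [← h3, dy_lift (k + N) t 1]
      push_cast
      congr 1 <;> ring
    · refine ⟨N, t, ?_, ?_, ?_⟩
      · push_cast; congr 1; ring
      · have : 2 * (l * 2 ^ N) < 2 * t + 1 := by linarith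
        omega
      · have : 2 * t + 1 < 2 * ((l + 1) * 2 ^ N) := by linarith
        omega

lemma exists_pow_small {δ : ℝ} (hδ : 0 < δ) : ∃ n : ℕ, ∀ m : ℤ, (n : ℤ) ≤ m → (1 : ℝ) / 2 ^ m < δ := by
  obtain ⟨n, hn⟩ := exists_pow_lt_of_lt_one hδ (by norm_num : (1 / 2 : ℝ) < 1)
  refine ⟨n, fun m hm => lt_of_le_of_lt ?_ hn⟩
  rw [one_div_pow, one_div_le_one_div (two_zpow_pos _) (by positivity), ← zpow_natCast]
  exact zpow_le_zpow_right₀ (by norm_num) hm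

lemma exists_cone {a b : ℝ} (hab : a < b) : ∃ j i : ℤ, a ≤ dy j i ∧ dy j (i + 1) ≤ b := by
  obtain ⟨n, hn⟩ := exists_pow_small (δ := (b - a) / 2) (by linarith)
  have hn := hn n le_rfl
  have hp := two_zpow_pos (n : ℤ)
  refine ⟨n, ⌈a * 2 ^ (n : ℤ)⌉, ?_, ?_⟩
  · unfold dy; rw [le_div_iff₀ hp]; exact Int.le_ceil _
  · have h1 := (Int.ceil_lt_add_one (a * 2 ^ (n : ℤ))).le
    have h2 : dy n ⌈a * 2 ^ (n : ℤ)⌉ ≤ a + 1 / 2 ^ (n : ℤ) := by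
      unfold dy; rw [div_le_iff₀ hp, add_mul, one_div_mul_cancel hp.ne']; exact h1
    rw [dy_succ]; linarith

/-! ### Affinity from preservation of standard intervals -/

lemma len_lt {a b : ℤ} : (1 : ℝ) / 2 ^ a < 1 / 2 ^ b ↔ b < a := by
  rw [one_div_lt_one_div (two_zpow_pos _) (two_zpow_pos _)]
  exact zpow_lt_zpow_iff_right₀ (by norm_num)

lemma len_le {a b : ℤ} : (1 : ℝ) / 2 ^ a ≤ 1 / 2 ^ b ↔ b ≤ a := by
  rw [← not_lt, len_lt, not_lt]

lemma len_succ (a : ℤ) : (1 : ℝ) / 2 ^ a = 1 / 2 ^ (a + 1) + 1 / 2 ^ (a + 1) := by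
  rw [zpow_add_one₀ (by norm_num)]
  have := two_zpow_pos a
  field_simp
  norm_num

lemma dy_child (j i : ℤ) : dy (j + 1) (2 * i) = dy j i := by
  have := dy_lift j i 1
  simp at this
  rw [this, mul_comm]

lemma dy_child' (j i : ℤ) : dy (j + 1) (2 * i + 1 + 1) = dy j (i + 1) := by
  rw [← dy_child j (i + 1)]; congr 1; ring

/-- `F` carries the standard interval `(j, i)` to a standard interval, on endpoints. -/
def ToCone (F : ℝ → ℝ) (j i : ℤ) : Prop :=
  ∃ a b : ℤ, F (dy j i) = dy a b ∧ F (dy j (i + 1)) = dy a (b + 1)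

/-- If an interval and its two halves are carried to standard intervals, the midpoint is carried to
the midpoint: each half of the image is at most half as long as the whole. -/
lemma mid_to_mid {F : ℝ → ℝ} (hF : StrictMono F) {j i a b : ℤ}
    (h1 : F (dy j i) = dy a b) (h2 : F (dy j (i + 1)) = dy a (b + 1))
    (hl : ToCone F (j + 1) (2 * i)) (hr : ToCone F (j + 1) (2 * i + 1)) :
    F (dy (j + 1) (2 * i + 1)) = dy (a + 1) (2 * b + 1) := by
  obtain ⟨c, d, h3, h4⟩ := hl
  obtain ⟨c', d', h5, h6⟩ := hr
  rw [dy_child, h1] at h3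
  rw [dy_child', h2] at h6
  have m1 := hF (dy_lt_succ (j + 1) (2 * i))
  have m2 := hF (dy_lt_succ (j + 1) (2 * i + 1))
  rw [dy_child, h1] at m1
  rw [dy_child', h2] at m2
  have e1 := dy_succ a b
  have e2 := dy_succ c d
  have e3 := dy_succ c' d'
  have e4 := dy_succ (a + 1) (2 * b)
  rw [dy_child] at e4
  have p1 : (1 : ℝ) / 2 ^ c < 1 / 2 ^ a := by linarith
  have p2 : (1 : ℝ) / 2 ^ c' < 1 / 2 ^ a := by linarith
  have q1 : (1 : ℝ) / 2 ^ c ≤ 1 / 2 ^ (a + 1) := len_le.2 (len_lt.1 p1)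
  have q2 : (1 : ℝ) / 2 ^ c' ≤ 1 / 2 ^ (a + 1) := len_le.2 (len_lt.1 p2)
  have := len_succ a
  linarith

lemma grid_to_grid {F : ℝ → ℝ} (hF : StrictMono F) {j i a b : ℤ}
    (h1 : F (dy j i) = dy a b) (h2 : F (dy j (i + 1)) = dy a (b + 1))
    (hall : ∀ j' i', dy j i ≤ dy j' i' → dy j' (i' + 1) ≤ dy j (i + 1) → ToCone F j' i')
    (n : ℕ) : ∀ t : ℤ, 0 ≤ t → t ≤ 2 ^ n →
      F (dy (j + n) (i * 2 ^ n + t)) = dy (a + n) (b * 2 ^ n + t) := by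
  induction n with
  | zero =>
    intro t h3 h4
    have : t = 0 ∨ t = 1 := by simp at h4; omega
    rcases this with rfl | rfl <;> simp [h1, h2]
  | succ n ih =>
    intro t h3 h4
    rw [pow_succ] at h4
    have aux : ∀ a b s : ℤ, dy (a + (n + 1 : ℕ)) (b * 2 ^ (n + 1) + 2 * s) = dy (a + n) (b * 2 ^ n + s) := by
      intro a b s
      rw [← dy_child (a + n)]
      push_cast
      congr 1 <;> ring
    rcases Int.even_or_odd' t with ⟨s, rfl | rfl⟩
    · rw [aux, aux]
      exact ih s (by omega) (by omega)
    · have e := ih s (by omega) (by omega)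
      have e' := ih (s + 1) (by omega) (by omega)
      have aux2 : ∀ a b : ℤ, dy (a + (n + 1 : ℕ)) (b * 2 ^ (n + 1) + (2 * s + 1))
          = dy (a + n + 1) (2 * (b * 2 ^ n + s) + 1) := by
        intro a b
        push_cast
        congr 1 <;> ring
      rw [aux2, aux2]
      rw [← add_assoc, ← add_assoc] at e'
      have b1 : dy j i ≤ dy (j + n) (i * 2 ^ n + s) := by
        rw [dy_lift j i n, dy_le]; omega
      have b2 : dy (j + n) (i * 2 ^ n + s + 1) ≤ dy j (i + 1) := by
        rw [dy_lift j (i + 1) n, dy_le, add_mul]; omega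
      refine mid_to_mid hF e e' (hall _ _ ?_ ?_) (hall _ _ ?_ ?_)
      · rwa [dy_child]
      · rw [← dy_child' (j + n)] at b2; exact (dy_lt_succ _ _).le.trans b2
      · rw [← dy_child (j + n)] at b1; exact b1.trans (dy_lt_succ _ _).le
      · rwa [dy_child']

lemma eq_of_grid {x y : ℝ} (hx : ∀ n : ℕ, |x - y| ≤ 1 / 2 ^ n) : x = y := by
  by_contra hne
  have : 0 < |x - y| := abs_pos.2 (sub_ne_zero.2 hne)
  obtain ⟨n, hn⟩ := exists_pow_small this
  have h1 := hn n le_rfl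
  have h2 := hx n
  rw [zpow_natCast] at h1
  linarith

/-- A strictly monotone map carrying all standard subintervals of a standard interval to standard
intervals is affine on it. -/
lemma affine_of_toCone {F : ℝ → ℝ} (hF : StrictMono F) {j i : ℤ}
    (hall : ∀ j' i', dy j i ≤ dy j' i' → dy j' (i' + 1) ≤ dy j (i + 1) → ToCone F j' i') :
    ∃ a b : ℤ, ∀ t : ℝ, 0 ≤ t → t ≤ 1 → F ((i + t) / 2 ^ j) = (b + t) / 2 ^ a := by
  obtain ⟨a, b, h1, h2⟩ := hall j i le_rfl le_rfl
  refine ⟨a, b, fun t h3 h4 => ?_⟩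
  have grid := grid_to_grid hF h1 h2 hall
  have conv : ∀ (a b : ℤ) (n : ℕ) (s : ℤ), dy (a + n) (b * 2 ^ n + s) = (b + s / 2 ^ n) / 2 ^ a := by
    intro a b n s
    unfold dy
    rw [zpow_add₀ (by norm_num), zpow_natCast]
    have := two_zpow_pos a
    push_cast
    field_simp
  simp only [conv] at grid
  have hpa := two_zpow_pos a
  have hpj := two_zpow_pos j
  rcases h4.lt_or_eq with h4 | rfl
  swap
  · have := grid 0 1 (by norm_num) (by norm_num)
    simpa using this
  suffices F ((i + t) / 2 ^ j) * 2 ^ a - b = t by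
    rw [eq_div_iff hpa.ne']; linarith
  refine eq_of_grid fun n => ?_
  have hpn : (0 : ℝ) < 2 ^ n := by positivity
  set m := ⌊t * 2 ^ n⌋ with hm
  have f1 : (m : ℝ) / 2 ^ n ≤ t := by rw [div_le_iff₀ hpn]; exact Int.floor_le _
  have f2 : t ≤ ((m + 1 : ℤ) : ℝ) / 2 ^ n := by
    rw [le_div_iff₀ hpn]; push_cast; exact (Int.lt_floor_add_one _).le
  have m0 : 0 ≤ m := Int.floor_nonneg.2 (by positivity)
  have m1 : m < 2 ^ n := by
    rw [Int.floor_lt]; push_cast; nlinarith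
  have g1 := grid n m m0 m1.le
  have g2 := grid n (m + 1) (by omega) (by omega)
  have k1 : F ((i + m / 2 ^ n) / 2 ^ j) ≤ F ((i + t) / 2 ^ j) := by
    apply hF.monotone; gcongr
  have k2 : F ((i + t) / 2 ^ j) ≤ F ((i + (m + 1 : ℤ) / 2 ^ n) / 2 ^ j) := by
    apply hF.monotone; gcongr
  rw [g1, div_le_iff₀ hpa] at k1
  rw [g2, le_div_iff₀ hpa] at k2
  have e : ((m + 1 : ℤ) : ℝ) / 2 ^ n = m / 2 ^ n + 1 / 2 ^ n := by push_cast; ring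
  rw [abs_le]
  constructor <;> linarith

/-! ### Patterns and gluing -/

/-- A pair of mutually inverse increasing bijections of `ℝ` preserving the dyadic rationals. -/
structure DyHomeo (h g : ℝ → ℝ) : Prop where
  hm : StrictMono h
  gm : StrictMono g
  gh : ∀ x, g (h x) = x
  hg : ∀ x, h (g x) = x
  hd : ∀ x ∈ zpows 2, h x ∈ zpows 2
  gd : ∀ x ∈ zpows 2, g x ∈ zpows 2

lemma DyHomeo.symm {h g : ℝ → ℝ} (H : DyHomeo h g) : DyHomeo g h :=
  ⟨H.gm, H.hm, H.hg, H.gh, H.gd, H.hd⟩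

/-- The `h`-image of the standard interval `(j, i)` lies in the standard interval `(k, l)`. -/
def Inside (h : ℝ → ℝ) (k l j i : ℤ) : Prop :=
  dy k l ≤ h (dy j i) ∧ h (dy j (i + 1)) ≤ dy k (l + 1)

/-- The pattern of `h` in the standard interval `(k, l)`: the set of `h`-images of standard
intervals that are contained in `(k, l)`, each recorded by its pair of endpoints in the affine
coordinate of `(k, l)` running from `0` to `1`. -/
def S (h : ℝ → ℝ) (k l : ℤ) : Set (ℝ × ℝ) :=
  {p | 0 ≤ p.1 ∧ p.2 ≤ 1 ∧
    ∃ j i : ℤ, h (dy j i) = (l + p.1) / 2 ^ k ∧ h (dy j (i + 1)) = (l + p.2) / 2 ^ k}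

/-- The affine map carrying the standard interval `(k, l)` onto `(k1, l1)`. -/
def tr (k l k1 l1 : ℤ) (y : ℝ) : ℝ := (l1 + (y * 2 ^ k - l)) / 2 ^ k1

lemma tr_mono (k l k1 l1 : ℤ) : StrictMono (tr k l k1 l1) := by
  intro x y hxy
  unfold tr
  have := two_zpow_pos k
  have := two_zpow_pos k1
  gcongr

lemma tr_tr (k l k1 l1 : ℤ) (y : ℝ) : tr k1 l1 k l (tr k l k1 l1 y) = y := by
  unfold tr
  have := two_zpow_pos k
  have := two_zpow_pos k1
  field_simp
  ring

lemma tr_pt (k l k1 l1 : ℤ) (p : ℝ) : tr k l k1 l1 ((l + p) / 2 ^ k) = (l1 + p) / 2 ^ k1 := by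
  unfold tr
  have := two_zpow_pos k
  field_simp
  ring

lemma tr_child (k l k1 l1 x : ℤ) : tr (k + 1) (2 * l + x) (k1 + 1) (2 * l1 + x) = tr k l k1 l1 := by
  funext y
  unfold tr
  rw [zpow_add_one₀ (by norm_num), zpow_add_one₀ (by norm_num)]
  have := two_zpow_pos k
  have := two_zpow_pos k1
  push_cast
  field_simp
  ring

lemma tr_left (k l k1 l1 : ℤ) : tr k l k1 l1 (dy k l) = dy k1 l1 := by
  have := tr_pt k l k1 l1 0
  simpa [dy] using this

lemma tr_right (k l k1 l1 : ℤ) : tr k l k1 l1 (dy k (l + 1)) = dy k1 (l1 + 1) := by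
  have := tr_pt k l k1 l1 1
  simpa [dy] using this

lemma tr_mid (k l k1 l1 : ℤ) :
    tr k l k1 l1 (dy (k + 1) (2 * l + 1)) = dy (k1 + 1) (2 * l1 + 1) := by
  rw [← tr_child k l k1 l1 1, tr_left]

lemma tr_toCone {k l k1 l1 a b : ℤ} (h1 : dy k l ≤ dy a b) (h2 : dy a (b + 1) ≤ dy k (l + 1)) :
    ToCone (tr k l k1 l1) a b := by
  obtain ⟨n, rfl⟩ := Int.le.dest (level_le h1 h2)
  have key : ∀ b : ℤ, tr k l k1 l1 (dy (k + n) b) = dy (k1 + n) (l1 * 2 ^ n + (b - l * 2 ^ n)) := by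
    intro b
    unfold tr dy
    rw [zpow_add₀ (by norm_num), zpow_add₀ (by norm_num), zpow_natCast]
    have := two_zpow_pos k
    have := two_zpow_pos k1
    push_cast
    field_simp
  refine ⟨_, _, key b, ?_⟩
  rw [key]
  congr 1
  ring

lemma exists_pt (k l : ℤ) (y : ℝ) : ∃ p : ℝ, y = (l + p) / 2 ^ k := by
  refine ⟨y * 2 ^ k - l, ?_⟩
  have := two_zpow_pos k
  field_simp
  ring

lemma pt_nonneg {k l : ℤ} {p : ℝ} : dy k l ≤ (l + p) / 2 ^ k ↔ 0 ≤ p := by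
  unfold dy
  rw [div_le_div_iff_of_pos_right (two_zpow_pos k)]
  constructor <;> intro <;> linarith

lemma pt_le_one {k l : ℤ} {p : ℝ} : (l + p) / 2 ^ k ≤ dy k (l + 1) ↔ p ≤ 1 := by
  unfold dy
  rw [div_le_div_iff_of_pos_right (two_zpow_pos k)]
  push_cast
  constructor <;> intro <;> linarith

lemma S_subset_iff {h : ℝ → ℝ} {k l k1 l1 : ℤ} : S h k l ⊆ S h k1 l1 ↔
    ∀ j i, Inside h k l j i → ∃ j1 i1, h (dy j1 i1) = tr k l k1 l1 (h (dy j i)) ∧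
      h (dy j1 (i1 + 1)) = tr k l k1 l1 (h (dy j (i + 1))) := by
  constructor
  · intro hS j i ⟨h1, h2⟩
    obtain ⟨p, hp⟩ := exists_pt k l (h (dy j i))
    obtain ⟨q, hq⟩ := exists_pt k l (h (dy j (i + 1)))
    rw [hp, pt_nonneg] at h1
    rw [hq, pt_le_one] at h2
    obtain ⟨-, -, j1, i1, h3, h4⟩ := hS (show (p, q) ∈ S h k l from ⟨h1, h2, j, i, hp, hq⟩)
    exact ⟨j1, i1, by rw [h3, hp, tr_pt], by rw [h4, hq, tr_pt]⟩
  · rintro hS ⟨p, q⟩ ⟨h1, h2, j, i, h3, h4⟩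
    dsimp only at h1 h2 h3 h4
    obtain ⟨j1, i1, h5, h6⟩ := hS j i ⟨by rw [h3, pt_nonneg]; exact h1, by rw [h4, pt_le_one]; exact h2⟩
    exact ⟨h1, h2, j1, i1, by rw [h5, h3, tr_pt], by rw [h6, h4, tr_pt]⟩

lemma mem_S_sub {h : ℝ → ℝ} {k l t : ℤ} {n : ℕ} (h1 : 0 ≤ t) (h2 : t + 1 ≤ 2 ^ n) (p : ℝ × ℝ) :
    p ∈ S h (k + n) (l * 2 ^ n + t) ↔ 0 ≤ p.1 ∧ p.2 ≤ 1 ∧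
      ((t + p.1) / 2 ^ n, (t + p.2) / 2 ^ n) ∈ S h k l := by
  have hn : (0 : ℝ) < 2 ^ n := by positivity
  have h1' : (0 : ℝ) ≤ t := by exact_mod_cast h1
  have h2' : (t : ℝ) + 1 ≤ 2 ^ n := by exact_mod_cast h2
  have key : ∀ q : ℝ, (((l * 2 ^ n + t : ℤ) : ℝ) + q) / 2 ^ (k + n) = (l + (t + q) / 2 ^ n) / 2 ^ k := by
    intro q
    rw [zpow_add₀ (by norm_num), zpow_natCast]
    have := two_zpow_pos k
    push_cast
    field_simp
    ring
  unfold S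
  simp only [Set.mem_ofPred_eq, key]
  constructor
  · rintro ⟨a, b, c⟩
    exact ⟨a, b, by positivity, by rw [div_le_one hn]; linarith, c⟩
  · rintro ⟨a, b, -, -, c⟩
    exact ⟨a, b, c⟩

/-- Equal patterns restrict to equal patterns on corresponding subintervals. -/
lemma S_sub_eq {h : ℝ → ℝ} {k l k1 l1 t : ℤ} {n : ℕ} (h1 : 0 ≤ t) (h2 : t + 1 ≤ 2 ^ n)
    (hS : S h k l = S h k1 l1) :
    S h (k + n) (l * 2 ^ n + t) = S h (k1 + n) (l1 * 2 ^ n + t) := by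
  ext p
  rw [mem_S_sub h1 h2, mem_S_sub h1 h2, hS]

lemma Inside.sub {h : ℝ → ℝ} (hm : StrictMono h) {k l j i j' i' : ℤ} (hi : Inside h k l j i)
    (h1 : dy j i ≤ dy j' i') (h2 : dy j' (i' + 1) ≤ dy j (i + 1)) : Inside h k l j' i' :=
  ⟨hi.1.trans (hm.monotone h1), (hm.monotone h2).trans hi.2⟩

/-- On the standard interval `(j, i)`, the map `h` followed by the affine map from `(k, l)` to
`(k1, l1)` agrees with the affine map from `(j, i)` to `(j1, i1)` followed by `h`. -/
def Conj (h : ℝ → ℝ) (k l k1 l1 j i j1 i1 : ℤ) : Prop :=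
  ∀ t : ℝ, 0 ≤ t → t ≤ 1 → tr k l k1 l1 (h ((i + t) / 2 ^ j)) = h ((i1 + t) / 2 ^ j1)

lemma Conj.symm {h : ℝ → ℝ} {k l k1 l1 j i j1 i1 : ℤ} (hc : Conj h k l k1 l1 j i j1 i1) :
    Conj h k1 l1 k l j1 i1 j i := by
  intro t h1 h2
  rw [← hc t h1 h2, tr_tr]

lemma Conj.left {h : ℝ → ℝ} {k l k1 l1 j i j1 i1 : ℤ} (hc : Conj h k l k1 l1 j i j1 i1) :
    tr k l k1 l1 (h (dy j i)) = h (dy j1 i1) := by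
  simpa [dy] using hc 0 le_rfl zero_le_one

lemma Conj.right {h : ℝ → ℝ} {k l k1 l1 j i j1 i1 : ℤ} (hc : Conj h k l k1 l1 j i j1 i1) :
    tr k l k1 l1 (h (dy j (i + 1))) = h (dy j1 (i1 + 1)) := by
  simpa [dy] using hc 1 zero_le_one le_rfl

lemma Conj.inside {h : ℝ → ℝ} {k l k1 l1 j i j1 i1 : ℤ} (hc : Conj h k l k1 l1 j i j1 i1)
    (hi : Inside h k l j i) : Inside h k1 l1 j1 i1 := by
  unfold Inside
  rw [← hc.left, ← hc.right, ← tr_left k l k1 l1, ← tr_right k l k1 l1]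
  exact ⟨(tr_mono _ _ _ _).monotone hi.1, (tr_mono _ _ _ _).monotone hi.2⟩

lemma Conj.S_subset {h g : ℝ → ℝ} (H : DyHomeo h g) {k l k1 l1 j i j1 i1 : ℤ}
    (hc : Conj h k l k1 l1 j i j1 i1) (hi : Inside h k l j i) : S g j i ⊆ S g j1 i1 := by
  rintro ⟨p, q⟩ ⟨h1, h2, a, b, h3, h4⟩
  dsimp only at h1 h2 h3 h4
  have hlt : (i + p) / 2 ^ j < (i + q) / 2 ^ j := by rw [← h3, ← h4]; exact H.gm (dy_lt_succ a b)
  rw [div_lt_div_iff_of_pos_right (two_zpow_pos j)] at hlt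
  have e3 : dy a b = h ((i + p) / 2 ^ j) := by rw [← h3, H.hg]
  have e4 : dy a (b + 1) = h ((i + q) / 2 ^ j) := by rw [← h4, H.hg]
  have c1 : dy k l ≤ dy a b := by
    rw [e3]; exact hi.1.trans (H.hm.monotone (pt_nonneg.2 h1))
  have c2 : dy a (b + 1) ≤ dy k (l + 1) := by
    rw [e4]; exact (H.hm.monotone (pt_le_one.2 h2)).trans hi.2
  obtain ⟨a', b', h5, h6⟩ := tr_toCone (k1 := k1) (l1 := l1) c1 c2
  rw [e3, hc p h1 (by linarith)] at h5
  rw [e4, hc q (by linarith) h2] at h6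
  exact ⟨h1, h2, a', b', by rw [← h5, H.gh], by rw [← h6, H.gh]⟩

lemma Conj.S_eq {h g : ℝ → ℝ} (H : DyHomeo h g) {k l k1 l1 j i j1 i1 : ℤ}
    (hc : Conj h k l k1 l1 j i j1 i1) (hi : Inside h k l j i) : S g j i = S g j1 i1 :=
  (hc.S_subset H hi).antisymm (hc.symm.S_subset H (hc.inside hi))

/-- Equal patterns are conjugate patterns: on each interval whose image lies in `(k, l)`, the
composite of `h`, the affine map and `h⁻¹` carries standard intervals to standard intervals. -/
lemma exists_conj {h g : ℝ → ℝ} (H : DyHomeo h g) {k l k1 l1 j i : ℤ}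
    (hS : S h k l ⊆ S h k1 l1) (hi : Inside h k l j i) : ∃ j1 i1, Conj h k l k1 l1 j i j1 i1 := by
  have hF : StrictMono (fun x => g (tr k l k1 l1 (h x))) :=
    fun x y hxy => H.gm (tr_mono _ _ _ _ (H.hm hxy))
  obtain ⟨a, b, hab⟩ := affine_of_toCone hF (j := j) (i := i) (fun j' i' h1 h2 => by
    obtain ⟨a, b, h3, h4⟩ := S_subset_iff.1 hS j' i' (hi.sub H.hm h1 h2)
    exact ⟨a, b, by dsimp only; rw [← h3, H.gh], by dsimp only; rw [← h4, H.gh]⟩)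
  refine ⟨a, b, fun t h1 h2 => ?_⟩
  rw [← hab t h1 h2, H.hg]

/-- Two conjugated neighbouring halves fit together to a conjugated parent interval, provided their
targets are a left and a right half respectively. -/
lemma Conj.merge {h g : ℝ → ℝ} (H : DyHomeo h g) {k l k1 l1 j i j1 i1 j2 i2 : ℤ}
    (hc1 : Conj h k l k1 l1 (j + 1) (2 * i) j1 i1)
    (hc2 : Conj h k l k1 l1 (j + 1) (2 * i + 1) j2 i2)
    (e1 : i1 % 2 = 0) (e2 : i2 % 2 = 1) : ∃ j' i', Conj h k l k1 l1 j i j' i' := by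
  have hmid : dy j1 (i1 + 1) = dy j2 i2 := H.hm.injective (by rw [← hc1.right, ← hc2.left])
  have hpos : ∀ n : ℕ, ∀ a b : ℤ, a % 2 = 1 → a = b * 2 ^ n → n = 0 := by
    intro n a b ha hb
    rcases n with _ | n
    · rfl
    · rw [pow_succ, ← mul_assoc] at hb; omega
  have hj : j1 = j2 := by
    rcases le_total j1 j2 with hle | hle
    · obtain ⟨n, rfl⟩ := Int.le.dest hle
      rw [dy_lift j1 _ n] at hmid
      have := le_antisymm (dy_le.1 hmid.le) (dy_le.1 hmid.ge)
      simp [hpos n _ _ e2 this.symm]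
    · obtain ⟨n, rfl⟩ := Int.le.dest hle
      rw [dy_lift j2 _ n] at hmid
      have := le_antisymm (dy_le.1 hmid.le) (dy_le.1 hmid.ge)
      simp [hpos n _ _ (by omega) this]
  subst hj
  have hi2 : i2 = i1 + 1 := le_antisymm (dy_le.1 hmid.ge) (dy_le.1 hmid.le)
  subst hi2
  obtain ⟨c, rfl⟩ : ∃ c, i1 = 2 * c := ⟨i1 / 2, by omega⟩
  obtain ⟨j', rfl⟩ : ∃ j', j1 = j' + 1 := ⟨j1 - 1, by omega⟩
  have conv : ∀ (j i : ℤ) (t : ℝ), (i + t) / 2 ^ j = ((2 * i : ℤ) + 2 * t) / 2 ^ (j + 1) := by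
    intro j i t
    rw [zpow_add_one₀ (by norm_num)]
    have := two_zpow_pos j
    push_cast
    field_simp
  have conv' : ∀ (j i : ℤ) (t : ℝ), (i + t) / 2 ^ j = ((2 * i + 1 : ℤ) + (2 * t - 1)) / 2 ^ (j + 1) := by
    intro j i t
    rw [conv]
    push_cast
    congr 1
    ring
  refine ⟨j', c, fun t h1 h2 => ?_⟩
  rcases le_total t (1 / 2) with ht | ht
  · rw [conv j, conv j']
    exact hc1 _ (by linarith) (by linarith)
  · rw [conv' j, conv' j']
    exact hc2 _ (by linarith) (by linarith)

/-- If the patterns of `h` agree on both halves of `(k, l)` and `(k1, l1)`, and the patterns of the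
inverse map `g` on the relevant intervals determine whether such an interval is a left or a right
half, then the patterns of `h` agree on `(k, l)` and `(k1, l1)` as well. -/
lemma S_subset_of_halves {h g : ℝ → ℝ} (H : DyHomeo h g) {k l k1 l1 : ℤ}
    (h0 : S h (k + 1) (2 * l) = S h (k1 + 1) (2 * l1))
    (h1 : S h (k + 1) (2 * l + 1) = S h (k1 + 1) (2 * l1 + 1))
    (hLD : ∀ j i j' i', Inside h k l j i → Inside h k1 l1 j' i' → S g j i = S g j' i' →
      i % 2 = i' % 2) : S h k l ⊆ S h k1 l1 := by
  obtain ⟨L, q, hL⟩ := mem_zpows_iff.1 (H.gd _ (dy_mem (k + 1) (2 * l + 1)))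
  have hL' : dy (k + 1) (2 * l + 1) = h (dy L q) := by rw [← hL, H.hg]
  have claim : ∀ m : ℕ, ∀ j i, L ≤ j + m → Inside h k l j i →
      ∃ j1 i1, Conj h k l k1 l1 j i j1 i1 := by
    intro m
    induction m with
    | zero =>
      intro j i hj hi
      simp only [Nat.cast_zero, add_zero] at hj
      obtain ⟨n, rfl⟩ := Int.le.dest hj
      rw [dy_lift L q n] at hL'
      rcases lt_or_ge i (q * 2 ^ n) with hlt | hge
      · have : Inside h (k + 1) (2 * l) (L + n) i := by
          refine ⟨by rw [dy_child]; exact hi.1, ?_⟩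
          rw [hL']
          exact H.hm.monotone (dy_le.2 hlt)
        obtain ⟨j1, i1, hc⟩ := exists_conj H h0.subset this
        have e := tr_child k l k1 l1 0
        simp only [add_zero] at e
        unfold Conj at hc ⊢
        rw [e] at hc
        exact ⟨j1, i1, hc⟩
      · have : Inside h (k + 1) (2 * l + 1) (L + n) i := by
          refine ⟨?_, by rw [dy_child']; exact hi.2⟩
          rw [hL']
          exact H.hm.monotone (dy_le.2 hge)
        obtain ⟨j1, i1, hc⟩ := exists_conj H h1.subset this
        unfold Conj at hc ⊢
        rw [tr_child] at hc
        exact ⟨j1, i1, hc⟩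
    | succ m ih =>
      intro j i hj hi
      have il : Inside h k l (j + 1) (2 * i) :=
        hi.sub H.hm (dy_child j i).ge (by rw [← dy_child' j i]; exact (dy_lt_succ _ _).le)
      have ir : Inside h k l (j + 1) (2 * i + 1) :=
        hi.sub H.hm (by rw [← dy_child j i]; exact (dy_lt_succ _ _).le) (dy_child' j i).le
      obtain ⟨j1, i1, hc1⟩ := ih (j + 1) (2 * i) (by push_cast at hj; omega) il
      obtain ⟨j2, i2, hc2⟩ := ih (j + 1) (2 * i + 1) (by push_cast at hj; omega) ir
      have e1 := hLD _ _ _ _ il (hc1.inside il) (hc1.S_eq H il)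
      have e2 := hLD _ _ _ _ ir (hc2.inside ir) (hc2.S_eq H ir)
      exact hc1.merge H hc2 (by omega) (by omega)
  rw [S_subset_iff]
  intro j i hi
  obtain ⟨j1, i1, hc⟩ := claim (L - j).toNat j i (by omega) hi
  exact ⟨j1, i1, hc.left.symm, hc.right.symm⟩

/-! ### Memory of patterns -/

/-- The pattern of `h` in an interval `(r + d, l)` of depth `d ≥ d0` inside the root interval
`(r, s)` depends only on the last `n` binary digits of `l`. -/
def Mem (h : ℝ → ℝ) (r s : ℤ) (d0 n : ℕ) : Prop :=
  ∀ (d d' : ℕ) (l l' : ℤ), d0 ≤ d → d0 ≤ d' → s * 2 ^ d ≤ l → l < (s + 1) * 2 ^ d →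
    s * 2 ^ d' ≤ l' → l' < (s + 1) * 2 ^ d' → l ≡ l' [ZMOD 2 ^ n] →
    S h (r + d) l = S h (r + d') l'

lemma Mem.mono {h : ℝ → ℝ} {r s : ℤ} {d0 d1 n : ℕ} (hM : Mem h r s d0 n) (hd : d0 ≤ d1) :
    Mem h r s d1 n :=
  fun d d' l l' h1 h2 => hM d d' l l' (hd.trans h1) (hd.trans h2)

lemma cong_lift {a b t : ℤ} {m : ℕ} (hab : a % 2 = b % 2) :
    a * 2 ^ m + t ≡ b * 2 ^ m + t [ZMOD 2 ^ (m + 1)] := by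
  have h1 : a ≡ b [ZMOD 2] := hab
  have h2 := h1.mul_left' (c := 2 ^ m)
  rw [← pow_succ] at h2
  rw [mul_comm a, mul_comm b]
  exact h2.add_right t

/-- If patterns of `g` remember exactly `m + 1` digits, then they determine the last
digit: if equal patterns occurred on intervals of different parity `l`, `l'`, then refining both by
`m` further digits would show that the digit in position `m` is irrelevant. -/
lemma parity_of_S_eq {g : ℝ → ℝ} {r s : ℤ} {d0 m : ℕ} (hM : Mem g r s d0 (m + 1))
    (hN : ¬ Mem g r s d0 m) {d d' : ℕ} {l l' : ℤ} (hd : d0 ≤ d) (hd' : d0 ≤ d')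
    (h1 : s * 2 ^ d ≤ l) (h2 : l < (s + 1) * 2 ^ d) (h1' : s * 2 ^ d' ≤ l')
    (h2' : l' < (s + 1) * 2 ^ d') (hS : S g (r + d) l = S g (r + d') l') : l % 2 = l' % 2 := by
  by_contra hpar
  apply hN
  intro e e' p p' he he' a1 a2 a1' a2' hpp
  set t := p % 2 ^ m with ht
  have hpos : (0 : ℤ) < 2 ^ m := by positivity
  have t0 : 0 ≤ t := Int.emod_nonneg _ hpos.ne'
  have t1 : t < 2 ^ m := Int.emod_lt_of_pos _ hpos
  have hp : p = p / 2 ^ m * 2 ^ m + t := (Int.ediv_mul_add_emod p _).symm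
  have hp' : p' = p' / 2 ^ m * 2 ^ m + t := by
    rw [ht, hpp]; exact (Int.ediv_mul_add_emod p' _).symm
  have adm : ∀ {d : ℕ} {l : ℤ}, s * 2 ^ d ≤ l → l < (s + 1) * 2 ^ d →
      s * 2 ^ (d + m) ≤ l * 2 ^ m + t ∧ l * 2 ^ m + t < (s + 1) * 2 ^ (d + m) := by
    intro d l b1 b2
    rw [pow_add]
    constructor <;> nlinarith
  have hS' := S_sub_eq (t := t) (n := m) t0 t1 hS
  have key : ∀ (e : ℕ) (p : ℤ) (_ : d0 ≤ e) (_ : s * 2 ^ e ≤ p) (_ : p < (s + 1) * 2 ^ e)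
      (_ : p = p / 2 ^ m * 2 ^ m + t),
      S g (r + e) p = S g (r + d + m) (l * 2 ^ m + t) := by
    intro e p he a1 a2 hp
    by_cases hc : (p / 2 ^ m) % 2 = l % 2
    · have := hM e (d + m) p (l * 2 ^ m + t) he (by omega) a1 a2 (adm h1 h2).1 (adm h1 h2).2
        (by conv_lhs => rw [hp]
            exact cong_lift hc)
      rw [this]; push_cast; rw [add_assoc]
    · have := hM e (d' + m) p (l' * 2 ^ m + t) he (by omega) a1 a2 (adm h1' h2').1 (adm h1' h2').2
        (by conv_lhs => rw [hp]
            exact cong_lift (by omega))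
      rw [this, hS']; push_cast; rw [add_assoc]
  have h3 := key e' p' he' a1' a2' hp'
  rw [key e p he a1 a2 hp]
  exact h3.symm

/-- One remembered digit can be discarded if the patterns of the inverse determine left and right. -/
lemma Mem.descend {h g : ℝ → ℝ} (H : DyHomeo h g) {r s : ℤ} {d0 n : ℕ}
    (hM : Mem h r s d0 (n + 1))
    (hLD : ∀ (d d' : ℕ) (l l' : ℤ), d0 ≤ d → d0 ≤ d' → s * 2 ^ d ≤ l → l < (s + 1) * 2 ^ d →
      s * 2 ^ d' ≤ l' → l' < (s + 1) * 2 ^ d' → ∀ j i j' i', Inside h (r + d) l j i →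
      Inside h (r + d') l' j' i' → S g j i = S g j' i' → i % 2 = i' % 2) :
    Mem h r s d0 n := by
  intro d d' l l' hd hd' h1 h2 h1' h2' hll
  have hch : ∀ x : ℤ, 0 ≤ x → x ≤ 1 →
      S h (r + d + 1) (2 * l + x) = S h (r + d' + 1) (2 * l' + x) := by
    intro x x0 x1
    have := hM (d + 1) (d' + 1) (2 * l + x) (2 * l' + x) (by omega) (by omega)
      (by rw [pow_succ]; linarith) (by rw [pow_succ]; linarith) (by rw [pow_succ]; linarith)
      (by rw [pow_succ]; linarith)
      (by rw [pow_succ']; exact (hll.mul_left' (c := 2)).add_right x)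
    push_cast at this
    rw [add_assoc, add_assoc]
    exact this
  have c0 := hch 0 le_rfl zero_le_one
  have c1 := hch 1 zero_le_one le_rfl
  rw [add_zero, add_zero] at c0
  exact (S_subset_of_halves H c0 c1 (hLD d d' l l' hd hd' h1 h2 h1' h2')).antisymm
    (S_subset_of_halves H c0.symm c1.symm (hLD d' d l' l hd' hd h1' h2' h1 h2))

/-- If all patterns agree, images of standard intervals cannot straddle the midpoint of a standard
interval unless they fill it: otherwise the pattern copied to a small interval around an endpoint
produces two crossing standard intervals. -/
lemma toCone_of_mem_zero {h g : ℝ → ℝ} (H : DyHomeo h g) {r s : ℤ} {d0 : ℕ} (hM : Mem h r s d0 0)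
    (n : ℕ) : ∀ (d : ℕ) (l : ℤ), d0 ≤ d → s * 2 ^ d ≤ l → l < (s + 1) * 2 ^ d → ∀ j i,
      Inside h (r + d) l j i →
      (1 : ℝ) / 2 ^ (r + d) ≤ (h (dy j (i + 1)) - h (dy j i)) * 2 ^ n → ToCone h j i := by
  induction n with
  | zero =>
    intro d l hd h1 h2 j i ⟨h3, h4⟩ h5
    rw [pow_zero, mul_one] at h5
    have := dy_succ (r + d) l
    exact ⟨r + d, l, by linarith, by linarith⟩
  | succ n ih =>
    intro d l hd h1 h2 j i ⟨h3, h4⟩ h5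
    have hab := H.hm (dy_lt_succ j i)
    have hda := H.hd _ (dy_mem j i)
    have hdb := H.hd _ (dy_mem j (i + 1))
    have hnc : ∀ j1 i1, h (dy j i) < h (dy j1 i1) → h (dy j1 i1) < h (dy j (i + 1)) →
        h (dy j (i + 1)) < h (dy j1 (i1 + 1)) → False := fun j1 i1 e1 e2 e3 =>
      not_cross j i j1 i1 (H.hm.lt_iff_lt.1 e1) (H.hm.lt_iff_lt.1 e2) (H.hm.lt_iff_lt.1 e3)
    have hnc' : ∀ j1 i1, h (dy j1 i1) < h (dy j i) → h (dy j i) < h (dy j1 (i1 + 1)) →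
        h (dy j1 (i1 + 1)) < h (dy j (i + 1)) → False := fun j1 i1 e1 e2 e3 =>
      not_cross j1 i1 j i (H.hm.lt_iff_lt.1 e1) (H.hm.lt_iff_lt.1 e2) (H.hm.lt_iff_lt.1 e3)
    have hlen := len_succ (r + d)
    have hchild : ∀ x : ℤ, 0 ≤ x → x ≤ 1 → Inside h (r + d + 1) (2 * l + x) j i →
        ToCone h j i := by
      intro x x0 x1 hin
      have := ih (d + 1) (2 * l + x) (by omega) (by rw [pow_succ]; linarith)
        (by rw [pow_succ]; linarith) j i
      push_cast at this
      rw [← add_assoc] at this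
      refine this hin ?_
      rw [pow_succ] at h5
      linarith
    -- a dyadic point inside one of the halves is the midpoint of a deep interval in that half,
    -- into which the pattern of `(r + d, l)` is copied
    have copy : ∀ x : ℤ, 0 ≤ x → x ≤ 1 → ∀ y ∈ zpows 2, dy (r + d + 1) (2 * l + x) < y →
        y < dy (r + d + 1) (2 * l + x + 1) → ∃ k1 l1 j1 i1,
        h (dy j1 i1) = tr (r + d) l k1 l1 (h (dy j i)) ∧
        h (dy j1 (i1 + 1)) = tr (r + d) l k1 l1 (h (dy j (i + 1))) ∧
        tr (r + d) l k1 l1 (dy (r + d + 1) (2 * l + 1)) = y ∧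
        dy (r + d + 1) (2 * l + x) ≤ dy k1 l1 ∧
        dy k1 (l1 + 1) ≤ dy (r + d + 1) (2 * l + x + 1) := by
      intro x x0 x1 y hy hy1 hy2
      obtain ⟨K, q, rfl⟩ := mem_zpows_iff.1 hy
      obtain ⟨N, q', e1⟩ : ∃ (N : ℕ) (q' : ℤ), dy K q = dy (r + d + 1 + N) q' := by
        rcases le_total K (r + d + 1) with hle | hle
        · obtain ⟨n, hn⟩ := Int.le.dest hle
          exact ⟨0, q * 2 ^ n, by rw [dy_lift K q n, hn]; simp⟩
        · obtain ⟨n, rfl⟩ := Int.le.dest hle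
          exact ⟨n, q, rfl⟩
      rw [e1, dy_lift (r + d + 1) _ N, dy_lt] at hy1
      rw [e1, dy_lift (r + d + 1) _ N, dy_lt] at hy2
      obtain ⟨n, t, f1, f2, f3⟩ := midcone N (r + d + 1) q' (2 * l + x) hy1 hy2
      have hpn : (0 : ℤ) < 2 ^ n := by positivity
      have g1 : s * 2 ^ (d + 1 + n) ≤ t := by rw [pow_add, pow_succ]; nlinarith
      have g2 : t < (s + 1) * 2 ^ (d + 1 + n) := by rw [pow_add, pow_succ]; nlinarith
      have hS := hM d (d + 1 + n) l t hd (by omega) h1 h2 g1 g2 (by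
        rw [pow_zero]; exact Int.modEq_one)
      have el : r + ((d + 1 + n : ℕ) : ℤ) = r + d + 1 + n := by push_cast; ring
      rw [el] at hS
      obtain ⟨j1, i1, f4, f5⟩ := S_subset_iff.1 hS.subset j i ⟨h3, h4⟩
      refine ⟨r + d + 1 + n, t, j1, i1, f4, f5, ?_, ?_, ?_⟩
      · rw [tr_mid, e1, f1]
      · rw [dy_lift (r + d + 1) _ n, dy_le]; exact f2
      · rw [dy_lift (r + d + 1) _ n, dy_le]; exact f3
    have il := dy_child (r + d) l
    have ir := dy_child' (r + d) l
    rcases le_or_gt (h (dy j (i + 1))) (dy (r + d + 1) (2 * l + 1)) with hb | hb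
    · exact hchild 0 le_rfl zero_le_one ⟨by rw [add_zero, il]; exact h3, by rwa [add_zero]⟩
    rcases le_or_gt (dy (r + d + 1) (2 * l + 1)) (h (dy j i)) with ha | ha
    · exact hchild 1 zero_le_one le_rfl ⟨ha, by rw [ir]; exact h4⟩
    rcases h3.lt_or_eq with h3 | h3
    · exfalso
      obtain ⟨k1, l1, j1, i1, f1, f2, f3, f4, f5⟩ := copy 0 le_rfl zero_le_one _ hda
        (by rwa [add_zero, il]) (by rwa [add_zero])
      rw [add_zero] at f5
      have m1 := tr_mono (r + d) l k1 l1 ha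
      have m2 := tr_mono (r + d) l k1 l1 hb
      have m3 := (tr_mono (r + d) l k1 l1).monotone h4
      rw [tr_right] at m3
      exact hnc' j1 i1 (by rw [f1]; linarith) (by rw [f2]; linarith) (by rw [f2]; linarith)
    rcases h4.lt_or_eq with h4 | h4
    · exfalso
      obtain ⟨k1, l1, j1, i1, f1, f2, f3, f4, f5⟩ := copy 1 zero_le_one le_rfl _ hdb hb
        (by rwa [ir])
      have m1 := tr_mono (r + d) l k1 l1 ha
      have m2 := tr_mono (r + d) l k1 l1 hb
      have m3 := (tr_mono (r + d) l k1 l1).monotone h3.le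
      rw [tr_left] at m3
      exact hnc j1 i1 (by rw [f1]; linarith) (by rw [f1]; linarith) (by rw [f2]; linarith)
    exact ⟨r + d, l, h3.symm, h4⟩

/-- If all deep patterns agree, images of standard intervals are standard, so `h` is affine on one. -/
lemma affine_of_mem_zero {h g : ℝ → ℝ} (H : DyHomeo h g) {r s : ℤ} {d0 : ℕ}
    (hM : Mem h r s d0 0) :
    ∃ j i j1 i1 : ℤ, ∀ t : ℝ, 0 ≤ t → t ≤ 1 → h ((i + t) / 2 ^ j) = (i1 + t) / 2 ^ j1 := by
  obtain ⟨j, i, h1, h2⟩ := exists_cone (H.gm (dy_lt_succ (r + d0) (s * 2 ^ d0)))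
  have hin : Inside h (r + d0) (s * 2 ^ d0) j i := by
    refine ⟨?_, ?_⟩
    · rw [← H.hg (dy (r + d0) _)]; exact H.hm.monotone h1
    · rw [← H.hg (dy (r + d0) (s * 2 ^ d0 + 1))]; exact H.hm.monotone h2
  refine ⟨j, i, affine_of_toCone H.hm fun j' i' e1 e2 => ?_⟩
  have hlt := H.hm (dy_lt_succ j' i')
  obtain ⟨n, hn⟩ := pow_unbounded_of_one_lt
    ((1 : ℝ) / 2 ^ (r + d0) / (h (dy j' (i' + 1)) - h (dy j' i'))) (one_lt_two)
  refine toCone_of_mem_zero H hM n d0 (s * 2 ^ d0) le_rfl le_rfl ?_ j' i'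
    (hin.sub H.hm e1 e2) ?_
  · have : (0 : ℤ) < 2 ^ d0 := by positivity
    linarith
  · rw [div_lt_iff₀ (by linarith)] at hn
    linarith

/-! ### Local form of elements of `PL₂(ℝ)` and contractions -/

/-- `f` is affine on each side of `x`, with slopes powers of two, and `x` is not a break unless it
is dyadic. -/
def Loc (f : ℝ → ℝ) (x : ℝ) : Prop :=
  ∃ ε > 0, ∃ (k1 k2 : ℤ) (c1 c2 : ℝ), (∀ y, x - ε < y → y ≤ x → f y = 2 ^ k1 * y + c1) ∧
    (∀ y, x ≤ y → y < x + ε → f y = 2 ^ k2 * y + c2) ∧ (x ∉ zpows 2 → k1 = k2 ∧ c1 = c2)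

lemma two_zpow_inj {k k' : ℤ} (hk : (2 : ℝ) ^ k = 2 ^ k') : k = k' :=
  zpow_right_injective₀ (by norm_num) (by norm_num) hk

lemma affine_unique {k k' : ℤ} {c c' y z : ℝ} (hyz : y ≠ z)
    (h1 : (2 : ℝ) ^ k * y + c = 2 ^ k' * y + c') (h2 : (2 : ℝ) ^ k * z + c = 2 ^ k' * z + c') :
    k = k' ∧ c = c' := by
  have h3 : ((2 : ℝ) ^ k - 2 ^ k') * (y - z) = 0 := by linarith
  rcases mul_eq_zero.1 h3 with h3 | h3
  · have hk := two_zpow_inj (sub_eq_zero.1 h3)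
    subst hk
    exact ⟨rfl, by linarith⟩
  · exact absurd (sub_eq_zero.1 h3) hyz

open Filter Topology in
lemma germ_unique {f : ℝ → ℝ} {x : ℝ} {k k' : ℤ} {c c' : ℝ}
    (h1 : ∀ᶠ z in 𝓝 x, f z = 2 ^ k * z + c) (h2 : ∀ᶠ z in 𝓝 x, f z = 2 ^ k' * z + c') :
    k = k' ∧ c = c' := by
  obtain ⟨ε, hε, h3⟩ := Metric.eventually_nhds_iff.1 (h1.and h2)
  have a1 := h3 (y := x) (by simpa using hε)
  have a2 := h3 (y := x + ε / 2) (by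
    rw [Real.dist_eq, add_sub_cancel_left, abs_of_pos (by linarith)]; linarith)
  exact affine_unique (y := x) (z := x + ε / 2) (by linarith) (by rw [← a1.1, a1.2])
    (by rw [← a2.1, a2.2])

open Filter Topology in
/-- A map that is locally affine on an open interval is affine on it. -/
lemma affine_Ioo {f : ℝ → ℝ} {a b : ℝ} (hab : a < b)
    (hf : ∀ x, a < x → x < b → ∃ (k : ℤ) (c : ℝ), ∀ᶠ z in 𝓝 x, f z = 2 ^ k * z + c) :
    ∃ (k : ℤ) (c : ℝ), ∀ y, a < y → y < b → f y = 2 ^ k * y + c := by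
  obtain ⟨m, m1, m2⟩ := exists_between hab
  obtain ⟨k, c, hkc⟩ := hf m m1 m2
  refine ⟨k, c, fun y y1 y2 => ?_⟩
  have := (isPreconnected_Ioo (a := a) (b := b)).induction₂'
    (fun x y => ∀ k c, (∀ᶠ z in 𝓝 x, f z = 2 ^ k * z + c) → ∀ᶠ z in 𝓝 y, f z = 2 ^ k * z + c)
    (fun x hx => by
      obtain ⟨k0, c0, h0⟩ := hf x hx.1 hx.2
      refine Filter.Eventually.filter_mono nhdsWithin_le_nhds ?_
      filter_upwards [eventually_eventually_nhds.2 h0] with z hz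
      refine ⟨fun k c h1 => ?_, fun k c h1 => ?_⟩
      · obtain ⟨rfl, rfl⟩ := germ_unique h0 h1; exact hz
      · obtain ⟨rfl, rfl⟩ := germ_unique hz h1; exact h0)
    (fun x y z _ _ _ h1 h2 k c h3 => h2 k c (h1 k c h3)) ⟨m1, m2⟩ ⟨y1, y2⟩ k c hkc
  exact this.self_of_nhds

lemma MemPL.continuous {n : ℕ} {f : ℝ → ℝ} (hf : MemPL n f) : Continuous f :=
  hf.1.monotone.continuous_of_surjective hf.2.1

open Filter Topology in
lemma MemPL.loc {f : ℝ → ℝ} (hf : MemPL 2 f) (x : ℝ) : Loc f x := by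
  have hcont := hf.continuous
  obtain ⟨-, -, ⟨B, hB1, hB2, hB3⟩, -⟩ := hf
  simp only [Nat.cast_ofNat] at hB3
  by_cases hx : x ∈ B
  · obtain ⟨ε, hε, hd⟩ := hB2 x
    have hloc : ∀ y, y ≠ x → |y - x| < ε → ∃ (k : ℤ) (c : ℝ), ∀ᶠ z in 𝓝 y, f z = 2 ^ k * z + c := by
      intro y hy1 hy2
      obtain ⟨k, c, δ, hδ, h1⟩ := hB3 y (fun hy => hy1 (hd y hy hy2))
      refine ⟨k, c, Metric.eventually_nhds_iff.2 ⟨δ, hδ, fun z hz => h1 z ?_⟩⟩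
      rwa [Real.dist_eq] at hz
    obtain ⟨k1, c1, h1⟩ := affine_Ioo (f := f) (a := x - ε) (b := x) (by linarith)
      (fun y y1 y2 => hloc y y2.ne (abs_lt.2 ⟨by linarith, by linarith⟩))
    obtain ⟨k2, c2, h2⟩ := affine_Ioo (f := f) (a := x) (b := x + ε) (by linarith)
      (fun y y1 y2 => hloc y y1.ne' (abs_lt.2 ⟨by linarith, by linarith⟩))
    -- both formulas extend to `x` by continuity
    have e1 : f x = 2 ^ k1 * x + c1 := by
      refine tendsto_nhds_unique ((hcont.tendsto x).mono_left (nhdsWithin_le_nhds (s := Set.Iio x)))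
        (Tendsto.congr' (f₁ := fun y => 2 ^ k1 * y + c1) ?_ ?_)
      · filter_upwards [Ioo_mem_nhdsLT (show x - ε < x by linarith)] with y hy
        exact (h1 y hy.1 hy.2).symm
      · exact ((by fun_prop : Continuous fun y : ℝ => 2 ^ k1 * y + c1).tendsto x).mono_left
          nhdsWithin_le_nhds
    have e2 : f x = 2 ^ k2 * x + c2 := by
      refine tendsto_nhds_unique ((hcont.tendsto x).mono_left (nhdsWithin_le_nhds (s := Set.Ioi x)))
        (Tendsto.congr' (f₁ := fun y => 2 ^ k2 * y + c2) ?_ ?_)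
      · filter_upwards [Ioo_mem_nhdsGT (show x < x + ε by linarith)] with y hy
        exact (h2 y hy.1 hy.2).symm
      · exact ((by fun_prop : Continuous fun y : ℝ => 2 ^ k2 * y + c2).tendsto x).mono_left
          nhdsWithin_le_nhds
    refine ⟨ε, hε, k1, k2, c1, c2, fun y y1 y2 => ?_, fun y y1 y2 => ?_, fun hn => absurd (hB1 hx) hn⟩
    · rcases y2.lt_or_eq with y2 | rfl
      · exact h1 y y1 y2
      · exact e1
    · rcases y1.lt_or_eq with y1 | rfl
      · exact h2 y y1 y2
      · exact e2
  · obtain ⟨k, c, ε, hε, h1⟩ := hB3 x hx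
    exact ⟨ε, hε, k, k, c, c, fun y y1 y2 => h1 y (abs_lt.2 ⟨by linarith, by linarith⟩),
      fun y y1 y2 => h1 y (abs_lt.2 ⟨by linarith, by linarith⟩), fun _ => ⟨rfl, rfl⟩⟩

lemma locDiscrete_of_finite {B : Set ℝ} (hB : B.Finite) : LocDiscrete B := by
  intro x
  obtain ⟨ε, hε, h1⟩ := Metric.isOpen_iff.1 (hB.subset (Set.sdiff_subset (t := {x}))).isClosed.isOpen_compl
    x (by simp)
  refine ⟨ε, hε, fun y hy hyx => ?_⟩
  by_contra hne
  exact h1 (show y ∈ Metric.ball x ε by rwa [Metric.mem_ball, Real.dist_eq]) ⟨hy, hne⟩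

/-- An increasing bijection that is the identity outside `[a, c]` and affine on `[a, b]` and
`[b, c]`, with dyadic data, belongs to `BPL₂(ℝ)`. -/
lemma memBPL_of_pieces {f : ℝ → ℝ} {a b c u v : ℝ} {k m : ℤ} (ha : a ∈ zpows 2) (hb : b ∈ zpows 2)
    (hc : c ∈ zpows 2) (hu : u ∈ zpows 2) (hv : v ∈ zpows 2) (hab : a < b) (hbc : b < c)
    (h1 : ∀ x ≤ a, f x = x) (h2 : ∀ x, a ≤ x → x ≤ b → f x = 2 ^ k * x + u)
    (h3 : ∀ x, b ≤ x → x ≤ c → f x = 2 ^ m * x + v) (h4 : ∀ x, c ≤ x → f x = x)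
    (hm : StrictMono f) (hs : Function.Surjective f) : MemBPL 2 f := by
  refine ⟨⟨hm, hs, ⟨{a, b, c}, ?_, locDiscrete_of_finite (by simp), ?_⟩, ?_⟩, max |a| |c|, ?_⟩
  · rintro x (rfl | rfl | rfl) <;> assumption
  · intro x hx
    simp only [Set.mem_insert_iff, Set.mem_singleton_iff, not_or] at hx
    obtain ⟨xa, xb, xc⟩ := hx
    simp only [Nat.cast_ofNat]
    rcases lt_or_gt_of_ne xa with xa | xa
    · refine ⟨0, 0, a - x, by linarith, fun y hy => ?_⟩
      rw [abs_lt] at hy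
      rw [h1 y (by linarith)]; simp
    rcases lt_or_gt_of_ne xb with xb | xb
    · refine ⟨k, u, min (x - a) (b - x), lt_min (by linarith) (by linarith), fun y hy => ?_⟩
      rw [lt_min_iff, abs_lt, abs_lt] at hy
      exact h2 y (by linarith) (by linarith)
    rcases lt_or_gt_of_ne xc with xc | xc
    · refine ⟨m, v, min (x - b) (c - x), lt_min (by linarith) (by linarith), fun y hy => ?_⟩
      rw [lt_min_iff, abs_lt, abs_lt] at hy
      exact h3 y (by linarith) (by linarith)
    · refine ⟨0, 0, x - c, by linarith, fun y hy => ?_⟩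
      rw [abs_lt] at hy
      rw [h4 y (by linarith)]; simp
  · intro x hx
    rcases le_total x a with xa | xa
    · rwa [h1 x xa]
    rcases le_total x b with xb | xb
    · rw [h2 x xa xb]; exact zpows_add (zpows_mul hx k) hu
    rcases le_total x c with xc | xc
    · rw [h3 x xb xc]; exact zpows_add (zpows_mul hx m) hv
    · rwa [h4 x xc]
  · intro x hx
    rw [max_lt_iff] at hx
    rcases le_total x a with xa | xa
    · exact h1 x xa
    rcases le_total c x with xc | xc
    · exact h4 x xc
    have := abs_le_max_abs_abs xa xc
    exact absurd (max_lt hx.1 hx.2) (not_lt.2 this)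

/-- The map contracting `[a, a + L]` by a factor of two towards `a`, the identity outside
`[a, a + 3 * L / 2]`. -/
def cL (a L t : ℝ) : ℝ :=
  if t ≤ a then t else if t ≤ a + L then (t + a) / 2 else if t ≤ a + 3 * L / 2 then
    2 * t - a - 3 * L / 2 else t

/-- The inverse of `cL`. -/
def cLi (a L t : ℝ) : ℝ :=
  if t ≤ a then t else if t ≤ a + L / 2 then 2 * t - a else if t ≤ a + 3 * L / 2 then
    (t + a) / 2 + 3 * L / 4 else t

lemma cL_cLi {a L : ℝ} (hL : 0 < L) (t : ℝ) : cL a L (cLi a L t) = t := by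
  unfold cL cLi
  split_ifs <;> linarith

lemma cLi_cL {a L : ℝ} (hL : 0 < L) (t : ℝ) : cLi a L (cL a L t) = t := by
  unfold cL cLi
  split_ifs <;> linarith

lemma cL_mono {a L : ℝ} (hL : 0 < L) : StrictMono (cL a L) := by
  intro x y hxy
  unfold cL
  split_ifs <;> linarith

lemma cLi_mono {a L : ℝ} (hL : 0 < L) : StrictMono (cLi a L) := by
  intro x y hxy
  unfold cLi
  split_ifs <;> linarith

lemma cL_of_le {a L t : ℝ} (h : t ≤ a) : cL a L t = t := if_pos h

lemma cL_half {a L t : ℝ} (h1 : a ≤ t) (h2 : t ≤ a + L) : cL a L t = (t + a) / 2 := by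
  unfold cL
  split_ifs <;> linarith

lemma cL_lt {a L t : ℝ} (h1 : a < t) (h2 : t < a + 3 * L / 2) : cL a L t < t := by
  unfold cL
  split_ifs <;> linarith

lemma cL_mem {a L : ℝ} (ha : a ∈ zpows 2) (hL : L ∈ zpows 2) (h0 : 0 < L) : MemBPL 2 (cL a L) := by
  have h3 : 3 * L / 2 ∈ zpows 2 := by
    have := zpows_half (zpows_add (zpows_two_mul hL) hL)
    convert this using 1; ring
  refine memBPL_of_pieces (a := a) (b := a + L) (c := a + 3 * L / 2) (u := a / 2)
    (v := -(a + 3 * L / 2)) (k := -1) (m := 1) ha (zpows_add ha hL) (zpows_add ha h3) (zpows_half ha)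
    (zpows_neg (zpows_add ha h3)) (by linarith) (by linarith) ?_ ?_ ?_ ?_ (cL_mono h0)
    (fun t => ⟨_, cL_cLi h0 t⟩)
  all_goals
    intros
    unfold cL
    try simp only [zpow_neg_one, zpow_one]
    split_ifs <;> linarith

lemma cLi_mem {a L : ℝ} (ha : a ∈ zpows 2) (hL : L ∈ zpows 2) (h0 : 0 < L) : MemBPL 2 (cLi a L) := by
  have h3 : 3 * L / 2 ∈ zpows 2 := by
    have := zpows_half (zpows_add (zpows_two_mul hL) hL)
    convert this using 1; ring
  refine memBPL_of_pieces (a := a) (b := a + L / 2) (c := a + 3 * L / 2) (u := -a)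
    (v := (a + 3 * L / 2) / 2) (k := 1) (m := -1) ha (zpows_add ha (zpows_half hL)) (zpows_add ha h3)
    (zpows_neg ha) (zpows_half (zpows_add ha h3)) (by linarith) (by linarith) ?_ ?_ ?_ ?_
    (cLi_mono h0) (fun t => ⟨_, cLi_cL h0 t⟩)
  all_goals
    intros
    unfold cLi
    try simp only [zpow_neg_one, zpow_one]
    split_ifs <;> linarith

/-- Conjugation by `x ↦ -x` preserves `BPL₂(ℝ)`. -/
lemma MemBPL.reflect {f : ℝ → ℝ} (hf : MemBPL 2 f) : MemBPL 2 (fun x => -f (-x)) := by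
  obtain ⟨⟨hm, hs, ⟨B, hB1, hB2, hB3⟩, hd⟩, M, hM⟩ := hf
  refine ⟨⟨fun x y hxy => neg_lt_neg (hm (neg_lt_neg hxy)), fun y => ?_,
    ⟨{x | -x ∈ B}, ?_, ?_, ?_⟩, ?_⟩, M, fun x hx => ?_⟩
  · obtain ⟨x, hx⟩ := hs (-y)
    exact ⟨-x, by simp [hx]⟩
  · intro x hx
    exact zpows_neg_iff.1 (hB1 hx)
  · intro x
    obtain ⟨ε, hε, h1⟩ := hB2 (-x)
    refine ⟨ε, hε, fun y hy hyx => ?_⟩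
    have := h1 (-y) hy (by rw [← abs_neg]; convert hyx using 2; ring)
    linarith
  · intro x hx
    obtain ⟨k, c, ε, hε, h1⟩ := hB3 (-x) hx
    refine ⟨k, -c, ε, hε, fun y hy => ?_⟩
    dsimp only
    rw [h1 (-y) (by rw [← abs_neg]; convert hy using 2; ring)]
    ring
  · intro q hq
    exact zpows_neg (hd _ (zpows_neg hq))
  · dsimp only
    rw [hM (-x) (by rwa [abs_neg]), neg_neg]

/-- The map contracting `[b - L, b]` by a factor of two towards `b`. -/
def cR (b L t : ℝ) : ℝ := -cL (-b) L (-t)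

/-- The inverse of `cR`. -/
def cRi (b L t : ℝ) : ℝ := -cLi (-b) L (-t)

lemma cR_half {b L t : ℝ} (h1 : b - L ≤ t) (h2 : t ≤ b) : cR b L t = (t + b) / 2 := by
  unfold cR
  rw [cL_half (by linarith) (by linarith)]
  ring

lemma cR_mem {b L : ℝ} (hb : b ∈ zpows 2) (hL : L ∈ zpows 2) (h0 : 0 < L) : MemBPL 2 (cR b L) :=
  (cL_mem (zpows_neg hb) hL h0).reflect

lemma cRi_mem {b L : ℝ} (hb : b ∈ zpows 2) (hL : L ∈ zpows 2) (h0 : 0 < L) : MemBPL 2 (cRi b L) :=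
  (cLi_mem (zpows_neg hb) hL h0).reflect

lemma cRi_cR {b L : ℝ} (hL : 0 < L) (t : ℝ) : cRi b L (cR b L t) = t := by
  unfold cR cRi; rw [neg_neg, cLi_cL hL, neg_neg]

lemma cR_cRi {b L : ℝ} (hL : 0 < L) (t : ℝ) : cR b L (cRi b L t) = t := by
  unfold cR cRi; rw [neg_neg, cL_cLi hL, neg_neg]

/-! ### Normalizers of `BPL₂(ℝ)` -/

/-- An increasing homeomorphism `h` of `ℝ`, with inverse `g`, that normalizes `BPL₂(ℝ)`. -/
structure Nrm (h g : ℝ → ℝ) : Prop where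
  hm : StrictMono h
  gm : StrictMono g
  gh : ∀ x, g (h x) = x
  hg : ∀ x, h (g x) = x
  hn : ∀ f, MemBPL 2 f → MemBPL 2 (h ∘ f ∘ g)
  gn : ∀ f, MemBPL 2 f → MemBPL 2 (g ∘ f ∘ h)

lemma Nrm.symm {h g : ℝ → ℝ} (N : Nrm h g) : Nrm g h := ⟨N.gm, N.hm, N.hg, N.gh, N.gn, N.hn⟩

/-- Every dyadic point `x` is a break of an element of `BPL₂(ℝ)` that is the identity to the left of
`x` and moves all points just to the right of `x`. Its conjugate by `h` behaves in the same way at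
`h x`, so `h x` is a break of an element of `BPL₂(ℝ)`, hence dyadic. -/
lemma Nrm.dyadic {h g : ℝ → ℝ} (N : Nrm h g) {x : ℝ} (hx : x ∈ zpows 2) : h x ∈ zpows 2 := by
  by_contra hnx
  have h1 : (1 : ℝ) ∈ zpows 2 := ⟨1, 0, by simp⟩
  obtain ⟨ε, hε, k1, k2, c1, c2, e1, e2, e3⟩ :=
    (N.hn _ (cL_mem hx h1 one_pos)).1.loc (h x)
  obtain ⟨rfl, rfl⟩ := e3 hnx
  have hid : ∀ y, y ≤ h x → (h ∘ cL x 1 ∘ g) y = y := by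
    intro y hy
    have : g y ≤ x := by rw [← N.gh x]; exact N.gm.monotone hy
    simp only [Function.comp_apply]
    rw [cL_of_le this, N.hg]
  have hlt : ∀ y, h x < y → y < h (x + 1) → (h ∘ cL x 1 ∘ g) y < y := by
    intro y hy1 hy2
    have a1 : x < g y := by rw [← N.gh x]; exact N.gm hy1
    have a2 : g y < x + 1 := by rw [← N.gh (x + 1)]; exact N.gm hy2
    simp only [Function.comp_apply]
    conv_rhs => rw [← N.hg y]
    exact N.hm (cL_lt a1 (by linarith))
  obtain ⟨rfl, rfl⟩ := affine_unique (k' := 0) (c' := 0) (show h x ≠ h x - ε / 2 by linarith)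
    (by rw [← e1 _ (by linarith) le_rfl, hid _ le_rfl]; simp)
    (by rw [← e1 _ (by linarith) (by linarith), hid _ (by linarith)]; simp)
  obtain ⟨y, y1, y2⟩ := exists_between (lt_min (show h x < h x + ε by linarith)
    (N.hm (show x < x + 1 by linarith)))
  rw [lt_min_iff] at y2
  have b1 := hlt y y1 y2.2
  rw [e2 y y1.le y2.1] at b1
  simp at b1

lemma Nrm.dyHomeo {h g : ℝ → ℝ} (N : Nrm h g) : DyHomeo h g :=
  ⟨N.hm, N.gm, N.gh, N.hg, fun _ => N.dyadic, fun _ => N.symm.dyadic⟩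

/-- An affine map with slope a power of two and dyadic constant term carries all sufficiently small
standard intervals to standard intervals. -/
lemma affine_cone (k : ℤ) {c : ℝ} (hc : c ∈ zpows 2) : ∃ J : ℤ, ∀ j, J ≤ j → ∀ i : ℤ,
    ∃ b : ℤ, 2 ^ k * dy j i + c = dy (j - k) b ∧ 2 ^ k * dy j (i + 1) + c = dy (j - k) (b + 1) := by
  obtain ⟨C, p, rfl⟩ := mem_zpows_iff.1 hc
  refine ⟨C + k, fun j hj i => ?_⟩
  obtain ⟨n, hn⟩ := Int.le.dest (show C ≤ j - k by omega)
  have key : ∀ i : ℤ, 2 ^ k * dy j i + dy C p = dy (j - k) (i + p * 2 ^ n) := by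
    intro i
    rw [dy_lift C p n, hn]
    unfold dy
    rw [zpow_sub₀ (by norm_num)]
    have := two_zpow_pos j
    have := two_zpow_pos k
    push_cast
    field_simp
  exact ⟨_, key i, by rw [key]; congr 1; ring⟩

lemma zpows_of_affine {f : ℝ → ℝ} (hf : ∀ q ∈ zpows 2, f q ∈ zpows 2) {x c : ℝ} {k : ℤ}
    (hx : x ∈ zpows 2) (h : f x = 2 ^ k * x + c) : c ∈ zpows 2 := by
  have := zpows_sub (hf x hx) (zpows_mul hx k)
  rwa [h, add_sub_cancel_left] at this

open Filter Topology in
/-- An element of `BPL₂(ℝ)` carries all sufficiently small standard intervals to standard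
intervals. -/
lemma MemBPL.toCone {f : ℝ → ℝ} (hf : MemBPL 2 f) :
    ∃ J : ℤ, ∀ j, J ≤ j → ∀ i, ToCone f j i := by
  have hd := hf.1.2.2.2
  obtain ⟨M, hM⟩ := hf.2
  have hK : ∃ J : ℤ, ∀ j, J ≤ j → ∀ i, dy j i ∈ Set.Icc (-M - 1) (M + 1) → ToCone f j i := by
    refine (isCompact_Icc (a := -M - 1) (b := M + 1)).induction_on
      (p := fun s => ∃ J : ℤ, ∀ j, J ≤ j → ∀ i, dy j i ∈ s → ToCone f j i) ⟨0, by simp⟩ ?_ ?_ ?_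
    · rintro s t hst ⟨J, hJ⟩
      exact ⟨J, fun j hj i hi => hJ j hj i (hst hi)⟩
    · rintro s t ⟨J, hJ⟩ ⟨J', hJ'⟩
      refine ⟨max J J', fun j hj i hi => ?_⟩
      rcases hi with hi | hi
      · exact hJ j (le_of_max_le_left hj) i hi
      · exact hJ' j (le_of_max_le_right hj) i hi
    · rintro x -
      obtain ⟨ε, hε, k1, k2, c1, c2, e1, e2, e3⟩ := hf.1.loc x
      obtain ⟨n, hn⟩ := exists_pow_small (half_pos hε)
      refine ⟨Set.Ioo (x - ε / 2) (x + ε / 2),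
        mem_nhdsWithin_of_mem_nhds (Ioo_mem_nhds (by linarith) (by linarith)), ?_⟩
      by_cases hx : x ∈ zpows 2
      · have hc1 := zpows_of_affine hd hx (e1 x (by linarith) le_rfl)
        have hc2 := zpows_of_affine hd hx (e2 x le_rfl (by linarith))
        obtain ⟨J1, hJ1⟩ := affine_cone k1 hc1
        obtain ⟨J2, hJ2⟩ := affine_cone k2 hc2
        obtain ⟨L, q, rfl⟩ := mem_zpows_iff.1 hx
        refine ⟨max (max J1 J2) (max L n), fun j hj i ⟨hi1, hi2⟩ => ?_⟩
        simp only [max_le_iff] at hj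
        obtain ⟨⟨g1, g2⟩, g3, g4⟩ := hj
        have hs := hn j g4
        have hs' := dy_succ j i
        have hlt := dy_lt_succ j i
        obtain ⟨m, rfl⟩ := Int.le.dest g3
        have hor : dy (L + m) (i + 1) ≤ dy L q ∨ dy L q ≤ dy (L + m) i := by
          rw [dy_lift L q m, dy_le, dy_le]; omega
        rcases hor with hor | hor
        · obtain ⟨b, b1, b2⟩ := hJ1 _ g1 i
          exact ⟨_, b, by rw [e1 _ (by linarith) (by linarith), b1],
            by rw [e1 _ (by linarith) (by linarith), b2]⟩
        · obtain ⟨b, b1, b2⟩ := hJ2 _ g2 i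
          exact ⟨_, b, by rw [e2 _ (by linarith) (by linarith), b1],
            by rw [e2 _ (by linarith) (by linarith), b2]⟩
      · obtain ⟨rfl, rfl⟩ := e3 hx
        have hall : ∀ y, x - ε < y → y < x + ε → f y = 2 ^ k1 * y + c1 := by
          intro y y1 y2
          rcases le_total y x with hy | hy
          · exact e1 y y1 hy
          · exact e2 y hy y2
        obtain ⟨p, q, hp1, hp2⟩ := exists_cone (show x - ε / 2 < x + ε / 2 by linarith)
        have := dy_lt_succ p q
        have hc1 := zpows_of_affine hd (dy_mem p q) (hall _ (by linarith) (by linarith))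
        obtain ⟨J1, hJ1⟩ := affine_cone k1 hc1
        refine ⟨max J1 n, fun j hj i ⟨hi1, hi2⟩ => ?_⟩
        simp only [max_le_iff] at hj
        have hs := hn j hj.2
        have hs' := dy_succ j i
        have hlt := dy_lt_succ j i
        obtain ⟨b, b1, b2⟩ := hJ1 _ hj.1 i
        exact ⟨_, b, by rw [hall _ (by linarith) (by linarith), b1],
          by rw [hall _ (by linarith) (by linarith), b2]⟩
  obtain ⟨J, hJ⟩ := hK
  obtain ⟨n, hn⟩ := exists_pow_small one_pos
  refine ⟨max J n, fun j hj i => ?_⟩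
  simp only [max_le_iff] at hj
  by_cases hi : dy j i ∈ Set.Icc (-M - 1) (M + 1)
  · exact hJ j hj.1 i hi
  · have hs := hn j hj.2
    have hs' := dy_succ j i
    have hlt := dy_lt_succ j i
    have hi : dy j i < -M - 1 ∨ M + 1 < dy j i := by
      by_contra hcon
      push Not at hcon
      exact hi hcon
    refine ⟨j, i, hM _ ?_, hM _ ?_⟩ <;> rw [lt_abs] <;> rcases hi with hi | hi
    · right; linarith
    · left; linarith
    · right; linarith
    · left; linarith

lemma tr_halve (r e : ℤ) (d : ℕ) (l : ℤ) (y : ℝ) :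
    tr (r + d) l (r + d + 1) (l + e * 2 ^ d) y = (y + dy r e) / 2 := by
  unfold tr dy
  rw [zpow_add_one₀ (by norm_num), zpow_add₀ (by norm_num), zpow_natCast]
  have := two_zpow_pos r
  push_cast
  field_simp
  ring

/-- Standard intervals whose `h`-image lies in a small standard subinterval of the fixed interval
`(r, s)` have large level. -/
lemma level_large {h g : ℝ → ℝ} (N : Nrm h g) (r s J : ℤ) : ∃ n : ℕ, ∀ k l j i : ℤ, (n : ℤ) ≤ k →
    dy r s ≤ dy k l → dy k (l + 1) ≤ dy r (s + 1) → Inside h k l j i → J ≤ j := by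
  have gc : Continuous g := N.gm.monotone.continuous_of_surjective fun x => ⟨h x, N.gh x⟩
  have huc := (isCompact_Icc (a := dy r s) (b := dy r (s + 1))).uniformContinuousOn_of_continuous
    gc.continuousOn
  obtain ⟨δ, hδ, hgδ⟩ := Metric.uniformContinuousOn_iff.1 huc (1 / 2 ^ J)
    (by have := two_zpow_pos J; positivity)
  obtain ⟨n, hn⟩ := exists_pow_small hδ
  refine ⟨n, fun k l j i hk h1 h2 ⟨h3, h4⟩ => ?_⟩
  have hlt := N.hm (dy_lt_succ j i)
  have hs := hn k hk
  have hs' := dy_succ k l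
  have := hgδ _ ⟨h1.trans h3, by linarith⟩ _ ⟨by linarith, h4.trans h2⟩
    (show dist (h (dy j i)) (h (dy j (i + 1))) < δ by
      rw [dist_comm, Real.dist_eq, abs_of_pos (by linarith)]; linarith)
  rw [N.gh, N.gh, dist_comm, Real.dist_eq, dy_succ, add_sub_cancel_left,
    abs_of_pos (by have := two_zpow_pos j; positivity), len_lt] at this
  exact this.le

/-- Conjugating a contraction `c` of a root interval by `h` gives an element of `BPL₂(ℝ)`, so `c`
maps small `h`-images of standard intervals to such images, and patterns of `h` deep inside the
root are invariant under `c`. -/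
lemma S_contract {h g : ℝ → ℝ} (N : Nrm h g) (r s e : ℤ) {c ci : ℝ → ℝ} (hc : MemBPL 2 c)
    (hci : MemBPL 2 ci) (hcc : ∀ y, ci (c y) = y)
    (hhalf : ∀ y, dy r s ≤ y → y ≤ dy r (s + 1) → c y = (y + dy r e) / 2)
    (he : s ≤ e ∧ e ≤ s + 1) :
    ∃ d0 : ℕ, ∀ d : ℕ, d0 ≤ d → ∀ l : ℤ, s * 2 ^ d ≤ l → l < (s + 1) * 2 ^ d →
      S h (r + d) l = S h (r + d + 1) (l + e * 2 ^ d) := by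
  obtain ⟨J1, hJ1⟩ := (N.gn _ hc).toCone
  obtain ⟨J2, hJ2⟩ := (N.gn _ hci).toCone
  obtain ⟨n, hlev⟩ := level_large N r s (max J1 J2)
  refine ⟨(n - r).toNat, fun d hd l h1 h2 => ?_⟩
  have hroot : dy r s ≤ dy (r + d) l ∧ dy (r + d) (l + 1) ≤ dy r (s + 1) := by
    rw [dy_lift r s d, dy_lift r (s + 1) d, dy_le, dy_le]
    exact ⟨h1, h2⟩
  have hroot' : dy r s ≤ dy (r + d + 1) (l + e * 2 ^ d) ∧
      dy (r + d + 1) (l + e * 2 ^ d + 1) ≤ dy r (s + 1) := by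
    have q1 := dy_lift r s (d + 1)
    have q2 := dy_lift r (s + 1) (d + 1)
    push_cast at q1 q2
    rw [← add_assoc] at q1 q2
    rw [q1, q2, dy_le, dy_le, pow_succ]
    have : (0 : ℤ) < 2 ^ d := by positivity
    constructor <;> nlinarith
  apply Set.Subset.antisymm
  · rw [S_subset_iff]
    intro j i hi
    have hj := hlev _ _ j i (by omega) hroot.1 hroot.2 hi
    obtain ⟨j1, i1, e1, e2⟩ := hJ1 j (le_of_max_le_left hj) i
    have hlt := N.hm (dy_lt_succ j i)
    refine ⟨j1, i1, ?_, ?_⟩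
    · rw [tr_halve r, ← hhalf _ (by linarith [hi.1]) (by linarith [hi.2]), ← e1]
      exact N.hg _
    · rw [tr_halve r, ← hhalf _ (by linarith [hi.1]) (by linarith [hi.2]), ← e2]
      exact N.hg _
  · rw [S_subset_iff]
    intro j i hi
    have hj := hlev _ _ j i (by omega) hroot'.1 hroot'.2 hi
    obtain ⟨j1, i1, e1, e2⟩ := hJ2 j (le_of_max_le_right hj) i
    have hlt := N.hm (dy_lt_succ j i)
    have key : ∀ y, dy (r + d + 1) (l + e * 2 ^ d) ≤ y → y ≤ dy (r + d + 1) (l + e * 2 ^ d + 1) →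
        ci y = tr (r + d + 1) (l + e * 2 ^ d) (r + d) l y := by
      intro y y1 y2
      set z := tr (r + d + 1) (l + e * 2 ^ d) (r + d) l y with hz
      have hyz : y = (z + dy r e) / 2 := by rw [← tr_halve r e d l z, hz, tr_tr]
      have z1 : dy r s ≤ z := hroot.1.trans (by
        rw [← tr_left (r + d + 1) (l + e * 2 ^ d)]; exact (tr_mono _ _ _ _).monotone y1)
      have z2 : z ≤ dy r (s + 1) := le_trans (by
        rw [← tr_right (r + d + 1) (l + e * 2 ^ d)]; exact (tr_mono _ _ _ _).monotone y2) hroot.2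
      rw [hyz, ← hhalf z z1 z2, hcc]
    refine ⟨j1, i1, ?_, ?_⟩
    · rw [← key _ hi.1 (by linarith [hi.2]), ← e1]
      exact N.hg _
    · rw [← key _ (by linarith [hi.1]) hi.2, ← e2]
      exact N.hg _

/-- Patterns deep inside a root interval are determined by finitely many final digits. -/
lemma Nrm.exists_mem {h g : ℝ → ℝ} (N : Nrm h g) (r s : ℤ) : ∃ d0 : ℕ, Mem h r s d0 d0 := by
  have hL : (1 : ℝ) / 2 ^ r ∈ zpows 2 := mem_zpows_iff.2 ⟨r, 1, by simp [dy]⟩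
  have hL0 : (0 : ℝ) < 1 / 2 ^ r := by have := two_zpow_pos r; positivity
  have hs := dy_succ r s
  obtain ⟨d1, hd1⟩ := S_contract N r s s (cL_mem (dy_mem r s) hL hL0)
    (cLi_mem (dy_mem r s) hL hL0) (cLi_cL hL0) (fun y y1 y2 => cL_half y1 (by linarith))
    ⟨le_rfl, by omega⟩
  obtain ⟨d2, hd2⟩ := S_contract N r s (s + 1) (cR_mem (dy_mem r (s + 1)) hL hL0)
    (cRi_mem (dy_mem r (s + 1)) hL hL0) (cRi_cR hL0)
    (fun y y1 y2 => cR_half (by linarith) y2) ⟨by omega, le_rfl⟩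
  set d0 := max d1 d2 with hd0
  have hpos : (0 : ℤ) < 2 ^ d0 := by positivity
  have canon : ∀ (m : ℕ) (l : ℤ), s * 2 ^ (d0 + m) ≤ l → l < (s + 1) * 2 ^ (d0 + m) →
      S h (r + (d0 + m : ℕ)) l = S h (r + d0) (s * 2 ^ d0 + l % 2 ^ d0) := by
    intro m
    induction m with
    | zero =>
      intro l h1 h2
      rw [add_zero] at h1 h2 ⊢
      have : l % 2 ^ d0 = l - s * 2 ^ d0 := by
        rw [← Int.sub_mul_emod_self_right l s (2 ^ d0)]
        exact Int.emod_eq_of_lt (by linarith) (by linarith)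
      rw [this]
      congr 1
      ring
    | succ m ih =>
      intro l h1 h2
      have e1 : ((r + (d0 + (m + 1) : ℕ) : ℤ)) = r + (d0 + m : ℕ) + 1 := by push_cast; ring
      rw [e1]
      rw [← add_assoc, pow_succ] at h1 h2
      have step : ∀ (e l' : ℤ), l = l' + e * 2 ^ (d0 + m) → s * 2 ^ (d0 + m) ≤ l' →
          l' < (s + 1) * 2 ^ (d0 + m) →
          S h (r + (d0 + m : ℕ)) l' = S h (r + (d0 + m : ℕ) + 1) (l' + e * 2 ^ (d0 + m)) →
          S h (r + (d0 + m : ℕ) + 1) l = S h (r + d0) (s * 2 ^ d0 + l % 2 ^ d0) := by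
        rintro e l' rfl g1 g2 g3
        rw [← g3, ih l' g1 g2]
        congr 2
        rw [pow_add, show e * ((2 : ℤ) ^ d0 * 2 ^ m) = e * 2 ^ m * 2 ^ d0 by ring,
          Int.add_mul_emod_self_right]
      rcases lt_or_ge (l - s * 2 ^ (d0 + m)) ((s + 1) * 2 ^ (d0 + m)) with hl | hl
      · exact step s (l - s * 2 ^ (d0 + m)) (by ring) (by linarith) hl
          (hd1 _ (by omega) _ (by linarith) hl)
      · exact step (s + 1) (l - (s + 1) * 2 ^ (d0 + m)) (by ring) (by linarith) (by linarith)
          (hd2 _ (by omega) _ (by linarith) (by linarith))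
  refine ⟨d0, fun d d' l l' hd hd' h1 h2 h1' h2' hll => ?_⟩
  obtain ⟨m, rfl⟩ := Nat.exists_eq_add_of_le hd
  obtain ⟨m', rfl⟩ := Nat.exists_eq_add_of_le hd'
  have h3 := canon m' l' h1' h2'
  rw [canon m l h1 h2, hll]
  exact h3.symm

/-! ### Local affinity of normalizers -/

/-- A normalizer is affine on some standard interval, and carries it to a standard interval. With
`m'` minimal such that the patterns of `g` remember `m'` digits, either `m' = 0` and `g` itself is
affine somewhere, or the patterns of `g` determine left and right halves and all digits remembered
by `h` can be discarded. -/
lemma Nrm.exists_affine {h g : ℝ → ℝ} (N : Nrm h g) :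
    ∃ j i j1 i1 : ℤ, ∀ t : ℝ, 0 ≤ t → t ≤ 1 → h ((i + t) / 2 ^ j) = (i1 + t) / 2 ^ j1 := by
  classical
  have H := N.dyHomeo
  obtain ⟨j0, i0, h0⟩ := mem_zpows_iff.1 (H.gd 0 ⟨0, 0, by simp⟩)
  have h0' : h (dy j0 i0) = 0 := by rw [← h0, N.hg]
  obtain ⟨D0, hD0⟩ := N.symm.exists_mem j0 i0
  have hex : ∃ n, Mem g j0 i0 D0 n := ⟨D0, hD0⟩
  -- `m'` is the exact number of digits remembered by the patterns of `g`
  obtain ⟨m', hm', hmin⟩ : ∃ n, Mem g j0 i0 D0 n ∧ ∀ m < n, ¬ Mem g j0 i0 D0 m :=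
    ⟨Nat.find hex, Nat.find_spec hex, fun m hm => Nat.find_min hex hm⟩
  rcases m' with _ | m
  · obtain ⟨j, i, j1, i1, hg⟩ := affine_of_mem_zero H.symm hm'
    exact ⟨j1, i1, j, i, fun t t0 t1 => by rw [← hg t t0 t1, N.hg]⟩
  have hpos : 0 < h (dy j0 (i0 + 1)) := by rw [← h0']; exact N.hm (dy_lt_succ _ _)
  obtain ⟨r, hr⟩ := exists_pow_small hpos
  have hr := hr r le_rfl
  obtain ⟨d0, hd0⟩ := N.exists_mem r 0
  obtain ⟨n, hn⟩ := level_large N r 0 (j0 + D0)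
  set d1 := max d0 n with hd1
  have hM : Mem h r 0 d1 d0 := hd0.mono (le_max_left _ _)
  have hadm : ∀ (d : ℕ) (l : ℤ), d1 ≤ d → 0 * 2 ^ d ≤ l → l < (0 + 1) * 2 ^ d → ∀ j i,
      Inside h (r + d) l j i → ∃ e : ℕ, D0 ≤ e ∧ j = j0 + e ∧ i0 * 2 ^ e ≤ i ∧
        i < (i0 + 1) * 2 ^ e := by
    intro d l hd l1 l2 j i hi
    have q1 : dy r 0 ≤ dy (r + d) l := by rw [dy_lift r 0 d, dy_le]; exact l1
    have q2 : dy (r + d) (l + 1) ≤ dy r (0 + 1) := by rw [dy_lift r (0 + 1) d, dy_le]; exact l2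
    have hlev := hn (r + d) l j i (by omega) q1 q2 hi
    obtain ⟨e, rfl⟩ := Int.le.dest (show j0 ≤ j by omega)
    have z1 : dy r 0 = 0 := by simp [dy]
    have z2 : dy r (0 + 1) = 1 / 2 ^ (r : ℤ) := by simp [dy]
    refine ⟨e, by omega, rfl, ?_, ?_⟩
    · have : h (dy j0 i0) ≤ h (dy (j0 + e) i) := by linarith [hi.1]
      rw [N.hm.le_iff_le, dy_lift j0 i0 e, dy_le] at this
      exact this
    · have : h (dy (j0 + e) (i + 1)) ≤ h (dy j0 (i0 + 1)) := hi.2.trans (q2.trans (z2.le.trans hr.le))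
      rw [N.hm.le_iff_le, dy_lift j0 (i0 + 1) e, dy_le] at this
      exact this
  have hdesc : ∀ n, Mem h r 0 d1 n → Mem h r 0 d1 0 := by
    intro n
    induction n with
    | zero => exact id
    | succ n ih =>
      intro hMn
      refine ih (hMn.descend H ?_)
      intro d d' l l' hd hd' a1 a2 a1' a2' j i j' i' hi hi' hS
      obtain ⟨e, he, rfl, b1, b2⟩ := hadm d l hd a1 a2 j i hi
      obtain ⟨e', he', rfl, b1', b2'⟩ := hadm d' l' hd' a1' a2' j' i' hi'
      exact parity_of_S_eq hm' (hmin m (by omega)) he he' b1 b2 b1' b2' hS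
  exact affine_of_mem_zero H (hdesc d0 hM)

lemma Loc.comp {f u : ℝ → ℝ} {x : ℝ} (hf : StrictMono f) (h1 : Loc f x) (h2 : Loc u (f x))
    (hx : f x ∈ zpows 2 → x ∈ zpows 2) : Loc (fun y => u (f y)) x := by
  obtain ⟨ε, hε, k1, k2, c1, c2, e1, e2, e3⟩ := h1
  obtain ⟨η, hη, m1, m2, d1, d2, f1, f2, f3⟩ := h2
  have p1 := two_zpow_pos k1
  have p2 := two_zpow_pos k2
  have x1 := e1 x (by linarith) le_rfl
  have x2 := e2 x le_rfl (by linarith)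
  refine ⟨min ε (min (η / 2 ^ k1) (η / 2 ^ k2)), by positivity, m1 + k1, m2 + k2, 2 ^ m1 * c1 + d1,
    2 ^ m2 * c2 + d2, fun y y1 y2 => ?_, fun y y1 y2 => ?_, fun hn => ?_⟩
  · have a1 := min_le_left ε (min (η / 2 ^ k1) (η / 2 ^ k2))
    have a2 : min ε (min (η / 2 ^ k1) (η / 2 ^ k2)) ≤ η / 2 ^ k1 :=
      (min_le_right _ _).trans (min_le_left _ _)
    have a3 : x - y < η / 2 ^ k1 := by linarith
    rw [lt_div_iff₀ p1] at a3
    have b := e1 y (by linarith) y2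
    dsimp only
    rw [f1 (f y) (by linarith) (hf.monotone y2), b, zpow_add₀ (by norm_num)]
    ring
  · have a1 := min_le_left ε (min (η / 2 ^ k1) (η / 2 ^ k2))
    have a2 : min ε (min (η / 2 ^ k1) (η / 2 ^ k2)) ≤ η / 2 ^ k2 :=
      (min_le_right _ _).trans (min_le_right _ _)
    have a3 : y - x < η / 2 ^ k2 := by linarith
    rw [lt_div_iff₀ p2] at a3
    have b := e2 y y1 (by linarith)
    dsimp only
    rw [f2 (f y) (hf.monotone y1) (by linarith), b, zpow_add₀ (by norm_num)]
    ring
  · obtain ⟨rfl, rfl⟩ := e3 hn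
    obtain ⟨rfl, rfl⟩ := f3 (fun hfx => hn (hx hfx))
    exact ⟨rfl, rfl⟩

/-- Local affinity of a normalizer spreads from a neighbourhood of `a` to any interval that an
element of `BPL₂(ℝ)` contracts to `a`. -/
lemma Nrm.transport {h g f fi : ℝ → ℝ} (N : Nrm h g) (hf : MemBPL 2 f) (hfi : MemBPL 2 fi)
    (hinv : ∀ y, fi (f y) = y) {a lo hi δ : ℝ} (hlo : lo ≤ a) (hhi : a ≤ hi)
    (hhalf : ∀ y, lo ≤ y → y ≤ hi → f y = (y + a) / 2) (hδ : 0 < δ)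
    (hloc : ∀ y, |y - a| ≤ δ → Loc h y) (x : ℝ) (h1 : lo ≤ x) (h2 : x ≤ hi) : Loc h x := by
  have key : ∀ m : ℕ, ∀ x, lo ≤ x → x ≤ hi → |x - a| ≤ 2 ^ m * δ → Loc h x := by
    intro m
    induction m with
    | zero => intro x _ _ h3; exact hloc x (by simpa using h3)
    | succ m ih =>
      intro x h1 h2 h3
      have hfx := hhalf x h1 h2
      have h4 : Loc h (f x) := by
        refine ih _ (by linarith) (by linarith) ?_
        have : f x - a = (x - a) / 2 := by linarith
        rw [this, abs_div, abs_two]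
        rw [pow_succ] at h3
        linarith
      have hx1 : f x ∈ zpows 2 → x ∈ zpows 2 := fun hx => by
        rw [← hinv x]; exact hfi.1.2.2.2 _ hx
      have hx2 : h (f x) ∈ zpows 2 → f x ∈ zpows 2 := fun hx => by
        rw [← N.gh (f x)]; exact N.symm.dyadic hx
      have h5 : Loc (fun y => h (f y)) x := (hf.1.loc x).comp hf.1.1 h4 hx1
      have h6 := h5.comp (N.hm.comp hf.1.1) ((N.hn _ hfi).1.loc (h (f x))) (fun hx => hx1 (hx2 hx))
      convert h6 using 2 with y
      simp only [Function.comp_apply]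
      rw [N.gh, hinv]
  obtain ⟨m, hm⟩ := pow_unbounded_of_one_lt (|x - a| / δ) (one_lt_two)
  rw [div_lt_iff₀ hδ] at hm
  exact key m x h1 h2 hm.le

lemma Nrm.loc {h g : ℝ → ℝ} (N : Nrm h g) (x : ℝ) : Loc h x := by
  obtain ⟨j, i, j1, i1, haff⟩ := N.exists_affine
  have pj := two_zpow_pos j
  have pj1 := two_zpow_pos j1
  have hK : ∀ y, dy j i ≤ y → y ≤ dy j (i + 1) → h y = 2 ^ (j - j1) * y + (i1 - i) / 2 ^ j1 := by
    intro y y1 y2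
    obtain ⟨p, rfl⟩ := exists_pt j i y
    rw [haff p (pt_nonneg.1 y1) (pt_le_one.1 y2), zpow_sub₀ (by norm_num)]
    field_simp
    ring
  set a := dy (j + 1) (2 * i + 1) with ha
  set w : ℝ := 1 / 2 ^ (j + 1) with hw
  have hw0 : 0 < w := by have := two_zpow_pos (j + 1); positivity
  have ea : a = dy j i + w := by rw [ha, dy_succ, dy_child]
  have eb : dy j (i + 1) = a + w := by rw [← dy_child', dy_succ]
  have hloc : ∀ y, |y - a| ≤ w / 2 → Loc h y := by
    intro y hy
    rw [abs_le] at hy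
    exact ⟨w / 2, by linarith, _, _, _, _, fun z z1 z2 => hK z (by linarith) (by linarith),
      fun z z1 z2 => hK z (by linarith) (by linarith), fun _ => ⟨rfl, rfl⟩⟩
  obtain ⟨L, hL⟩ := exists_nat_gt |x - a|
  have hL0 : (0 : ℝ) < L := (abs_nonneg _).trans_lt hL
  have hLd : (L : ℝ) ∈ zpows 2 := ⟨L, 0, by simp⟩
  have had : a ∈ zpows 2 := dy_mem _ _
  rw [abs_lt] at hL
  rcases le_total a x with hax | hax
  · exact N.transport (cL_mem had hLd hL0) (cLi_mem had hLd hL0) (cLi_cL hL0) le_rfl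
      (by linarith : a ≤ a + L) (fun y => cL_half) (half_pos hw0) hloc x hax (by linarith)
  · exact N.transport (cR_mem had hLd hL0) (cRi_mem had hLd hL0) (cRi_cR hL0)
      (by linarith : a - L ≤ a) le_rfl (fun y => cR_half) (half_pos hw0) hloc x (by linarith) hax

lemma Nrm.memPLt {h g : ℝ → ℝ} (N : Nrm h g) : MemPLt 2 h := by
  refine ⟨Or.inl N.hm, fun y => ⟨g y, N.hg y⟩,
    ⟨{x | ¬ ∃ (k : ℤ) (c : ℝ), ∃ ε > 0, ∀ y : ℝ, |y - x| < ε → h y = 2 ^ k * y + c}, ?_, ?_, ?_⟩,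
    fun q => N.dyadic⟩
  · intro x hx
    by_contra hn
    obtain ⟨ε, hε, k1, k2, c1, c2, e1, e2, e3⟩ := N.loc x
    obtain ⟨rfl, rfl⟩ := e3 hn
    refine hx ⟨k1, c1, ε, hε, fun y hy => ?_⟩
    rw [abs_lt] at hy
    rcases le_total y x with hyx | hyx
    · exact e1 y (by linarith) hyx
    · exact e2 y hyx (by linarith)
  · intro x
    obtain ⟨ε, hε, k1, k2, c1, c2, e1, e2, -⟩ := N.loc x
    refine ⟨ε, hε, fun y hy hyx => ?_⟩
    by_contra hne
    apply hy
    rw [abs_lt] at hyx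
    rcases lt_or_gt_of_ne hne with hlt | hlt
    · refine ⟨k1, c1, min (x - y) (y - x + ε), lt_min (by linarith) (by linarith), fun z hz => ?_⟩
      rw [lt_min_iff, abs_lt, abs_lt] at hz
      exact e1 z (by linarith) (by linarith)
    · refine ⟨k2, c2, min (y - x) (x + ε - y), lt_min (by linarith) (by linarith), fun z hz => ?_⟩
      rw [lt_min_iff, abs_lt, abs_lt] at hz
      exact e2 z (by linarith) (by linarith)
  · intro x hx
    obtain ⟨k, c, ε, hε, h1⟩ := not_not.1 hx
    exact ⟨k, 2 ^ k, c, Or.inl (by simp), ε, hε, h1⟩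

lemma Nrm.image {h g : ℝ → ℝ} (N : Nrm h g) : h '' zpows 2 = zpows 2 := by
  apply Set.Subset.antisymm
  · rintro _ ⟨x, hx, rfl⟩
    exact N.dyadic hx
  · intro y hy
    exact ⟨g y, N.symm.dyadic hy, N.hg y⟩

lemma MemPLt.of_neg {h : ℝ → ℝ} (hh : MemPLt 2 (fun x => -h x)) : MemPLt 2 h := by
  obtain ⟨hm, hs, ⟨B, hB1, hB2, hB3⟩, hd⟩ := hh
  refine ⟨hm.symm.imp (fun H x y hxy => neg_lt_neg_iff.1 (H hxy))
    (fun H x y hxy => neg_lt_neg_iff.1 (H hxy)), fun y => ?_, ⟨B, hB1, hB2, fun x hx => ?_⟩,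
    fun q hq => zpows_neg_iff.1 (hd q hq)⟩
  · obtain ⟨x, hx⟩ := hs (-y)
    exact ⟨x, neg_injective hx⟩
  · obtain ⟨k, s, c, hk, ε, hε, h1⟩ := hB3 x hx
    refine ⟨k, -s, -c, ?_, ε, hε, fun y hy => ?_⟩
    · rcases hk with rfl | rfl
      · exact Or.inr rfl
      · exact Or.inl (neg_neg _)
    · have := h1 y hy
      dsimp only at this
      linarith

/-- Every homeomorphism `h` of `ℝ` normalizing `BPL₂(ℝ)` (i.e. with
`h BPL₂(ℝ) h⁻¹ = BPL₂(ℝ)`) belongs to `P̃L₂(ℝ)` and maps `ℤ[1/2]` onto `ℤ[1/2]`. -/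
theorem stmt_13 (h h' : ℝ → ℝ)
    (hcont : Continuous h) (hbij : Function.Bijective h)
    (hinv₁ : ∀ x, h' (h x) = x) (hinv₂ : ∀ x, h (h' x) = x)
    (hnorm₁ : ∀ f : ℝ → ℝ, MemBPL 2 f → MemBPL 2 (h ∘ f ∘ h'))
    (hnorm₂ : ∀ f : ℝ → ℝ, MemBPL 2 f → MemBPL 2 (h' ∘ f ∘ h)) :
    MemPLt 2 h ∧ h '' zpows 2 = zpows 2 := by
  rcases hcont.strictMono_of_inj hbij.injective with hm | hm
  · have N : Nrm h h' := ⟨hm, fun x y hxy => hm.lt_iff_lt.1 (by rwa [hinv₂, hinv₂]), hinv₁, hinv₂,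
      hnorm₁, hnorm₂⟩
    exact ⟨N.memPLt, N.image⟩
  -- an orientation-reversing normalizer becomes increasing after composition with `x ↦ -x`
  · have N : Nrm (fun x => -h x) (fun x => h' (-x)) := by
      refine ⟨fun x y hxy => neg_lt_neg (hm hxy), fun x y hxy => hm.lt_iff_gt.1 ?_, fun x => ?_,
        fun x => ?_, fun f hf => (hnorm₁ f hf).reflect, fun f hf => hnorm₂ _ hf.reflect⟩
      · rw [hinv₂, hinv₂]; linarith
      · simp [hinv₁]
      · simp [hinv₂]
    refine ⟨N.memPLt.of_neg, ?_⟩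
    have hi := N.image
    ext y
    constructor
    · rintro ⟨x, hx, rfl⟩
      exact zpows_neg_iff.1 (N.dyadic hx)
    · intro hy
      obtain ⟨x, hx, hxy⟩ := hi.ge (zpows_neg hy)
      exact ⟨x, hx, neg_injective hxy⟩
end
end
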